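/- arXiv:0910.2055 — 3 statements merged into one kernel-verified Lean document; each statement's English description precedes it below -/
import Mathlib

section
/- There exist a 24-dimensional real inner product space V, a lattice Υ in V with √2·Υ even unimodular, and a polarization M, N of Υ with M, N even unimodular, such that μ(L(M,N,3)) = 4; and there exist such data with μ(L(M,N,3)) = 6. In particular, there exists a positive definite even unimodular lattice of rank 72 whose minimum norm is exactly 6. -/
noncomputable section

open scoped RealInnerProductSpace Pointwise
open Module

variable {V : Type*} [NormedAddCommGroup V] [InnerProductSpace ℝ V]

/-- `L` is a (full) lattice in `V`: a finitely generated `ℤ`-submodule spanning `V` over `ℝ`. -/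
def IsLat (L : Submodule ℤ V) : Prop :=
  L.FG ∧ Submodule.span ℝ (L : Set V) = ⊤

/-- The lattice `L` is integral: all inner products of lattice vectors are integers. -/
def IsIntegralLat (L : Submodule ℤ V) : Prop :=
  ∀ x ∈ L, ∀ y ∈ L, ∃ n : ℤ, ⟪x, y⟫ = (n : ℝ)

/-- The lattice `L` is even: it is integral and all norms are even integers. -/
def IsEvenLat (L : Submodule ℤ V) : Prop :=
  IsIntegralLat L ∧ ∀ x ∈ L, ∃ n : ℤ, ⟪x, x⟫ = 2 * (n : ℝ)

/-- The lattice `L` is unimodular: the Gram matrix of some `ℤ`-basis has determinant 1. -/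
def IsUnimodularLat (L : Submodule ℤ V) : Prop :=
  ∃ (n : ℕ) (b : Basis (Fin n) ℤ L),
    (Matrix.of fun i j : Fin n => ⟪(b i : V), (b j : V)⟫).det = 1

/-- The minimum norm `μ(L)` of a lattice. -/
def minNorm (L : Submodule ℤ V) : ℝ :=
  sInf {r : ℝ | ∃ x ∈ L, x ≠ 0 ∧ ⟪x, x⟫ = r}

/-- `√2·Υ` is an even unimodular lattice: all norms of `Υ` are integers, all doubled inner
products are integers, and the Gram matrix of the form `2⟪·,·⟫` on a `ℤ`-basis of `Υ` has
determinant 1. -/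
def SqrtTwoEvenUnimod (Υ : Submodule ℤ V) : Prop :=
  (∀ x ∈ Υ, ∃ n : ℤ, ⟪x, x⟫ = (n : ℝ)) ∧
  (∀ x ∈ Υ, ∀ y ∈ Υ, ∃ n : ℤ, 2 * ⟪x, y⟫ = (n : ℝ)) ∧
  ∃ (n : ℕ) (b : Basis (Fin n) ℤ Υ),
    (Matrix.of fun i j : Fin n => 2 * ⟪(b i : V), (b j : V)⟫).det = 1

/-- `M, N` is a polarization of `Υ`: a pair of integral sublattices with
`M + N = Υ` and `M ∩ N = 2Υ`. -/
def IsPolarization (Υ M N : Submodule ℤ V) : Prop :=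
  M ≤ Υ ∧ N ≤ Υ ∧ IsIntegralLat M ∧ IsIntegralLat N ∧ M ⊔ N = Υ ∧ M ⊓ N = (2 : ℤ) • Υ

/-- The sublattice `L_M = {(x_1,…,x_k) ∈ M^k : x_1+⋯+x_k ∈ M ∩ N}` of `V^k`. -/
def LsubM (M N : Submodule ℤ V) (k : ℕ) : Submodule ℤ (PiLp 2 fun _ : Fin k => V) where
  carrier := {v | (∀ i, v i ∈ M) ∧ (∑ i, v i) ∈ M ⊓ N}
  add_mem' := fun {a b} ha hb =>
    ⟨fun i => M.add_mem (ha.1 i) (hb.1 i), by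
      have h : (∑ i, (a + b) i) = (∑ i, a i) + ∑ i, b i :=
        (Finset.sum_congr rfl fun i _ => rfl).trans Finset.sum_add_distrib
      rw [h]; exact (M ⊓ N).add_mem ha.2 hb.2⟩
  zero_mem' := ⟨fun _ => M.zero_mem, by
      have h : (∑ i : Fin k, (0 : PiLp 2 fun _ : Fin k => V) i) = 0 :=
        Finset.sum_eq_zero fun _ _ => rfl
      rw [h]; exact (M ⊓ N).zero_mem⟩
  smul_mem' := fun c a ha =>
    ⟨fun i => M.smul_mem c (ha.1 i), by
      have h : (∑ i, (c • a) i) = c • ∑ i, a i := by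
        show (∑ i, c • a i) = c • ∑ i, a i
        exact Finset.smul_sum.symm
      rw [h]; exact (M ⊓ N).smul_mem c ha.2⟩

/-- The diagonal sublattice `L^N = {(y,…,y) : y ∈ N}` of `V^k`. -/
def LsupN (N : Submodule ℤ V) (k : ℕ) : Submodule ℤ (PiLp 2 fun _ : Fin k => V) where
  carrier := {v | ∃ y ∈ N, ∀ i, v i = y}
  add_mem' := fun {a b} ha hb => by
    obtain ⟨ya, hya, ha⟩ := ha
    obtain ⟨yb, hyb, hb⟩ := hb
    exact ⟨ya + yb, N.add_mem hya hyb, fun i => by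
      show a i + b i = ya + yb
      rw [ha i, hb i]⟩
  zero_mem' := ⟨0, N.zero_mem, fun _ => rfl⟩
  smul_mem' := fun c a ha => by
    obtain ⟨y, hy, h⟩ := ha
    exact ⟨c • y, N.smul_mem c hy, fun i => by
      show c • a i = c • y
      rw [h i]⟩

/-- The lattice `L(M,N,k) = L_M + L^N ⊆ V^k`. -/
def LMN (M N : Submodule ℤ V) (k : ℕ) : Submodule ℤ (PiLp 2 fun _ : Fin k => V) :=
  LsubM M N k ⊔ LsupN N k

/-- The Leech polarization setup: `V` is 24-dimensional, `√2·Υ` is even unimodular with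
minimum norm 4, and `M, N` is a polarization of `Υ` by two copies of the Leech lattice. -/
def LeechSetup (Υ M N : Submodule ℤ V) : Prop :=
  Module.finrank ℝ V = 24 ∧ IsLat Υ ∧ SqrtTwoEvenUnimod Υ ∧
  (∀ v ∈ Υ, v ≠ 0 → 4 ≤ 2 * ⟪v, v⟫) ∧
  IsPolarization Υ M N ∧
  IsLat M ∧ IsEvenLat M ∧ IsUnimodularLat M ∧ minNorm M = 4 ∧
  IsLat N ∧ IsEvenLat N ∧ IsUnimodularLat N ∧ minNorm N = 4

/-- `(w,x,y,z) ∈ N × M × M × M` is admissible if `x + y + z ∈ M ∩ N`. -/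
def Admissible (M N : Submodule ℤ V) (w x y z : V) : Prop :=
  w ∈ N ∧ x ∈ M ∧ y ∈ M ∧ z ∈ M ∧ x + y + z ∈ M ⊓ N

/-- An offender is an admissible quadruple all three of whose associated vectors
`w+x, w+y, w+z` have norm 2. -/
def Offender (M N : Submodule ℤ V) (w x y z : V) : Prop :=
  Admissible M N w x y z ∧
  ⟪w + x, w + x⟫ = 2 ∧ ⟪w + y, w + y⟫ = 2 ∧ ⟪w + z, w + z⟫ = 2

/-- A super offender is an offender with `⟪w,w⟫ = 4` whose multiset of norms
`{⟪x,x⟫, ⟪y,y⟫, ⟪z,z⟫}` equals `{6,6,4}`. -/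
def SuperOffender (M N : Submodule ℤ V) (w x y z : V) : Prop :=
  Offender M N w x y z ∧ ⟪w, w⟫ = 4 ∧
  ({⟪x, x⟫, ⟪y, y⟫, ⟪z, z⟫} : Multiset ℝ) = ({6, 6, 4} : Multiset ℝ)

/-!
Let `α` be an endomorphism of `V` acting as `(1 + √-7)/2`, with adjoint `ᾱ = 1 - α`. An `α`-stable
even unimodular lattice `L` is one half of the polarization `αΥ, ᾱΥ` of `Υ = α⁻¹L`, because
`α + ᾱ = 1` and `αᾱ = 2`. For `L = E₈` the lattice `Λ = L(αΥ, ᾱΥ, 3)` is Turyn's Leech lattice.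
It is again `α`-stable, so that `Λ` is one half of a polarization of the lattice `Υ = α⁻¹Λ` of
minimum norm `2`. An Eichler transformation replaces the other half by an even lattice `N`
containing a prescribed vector `r ∈ Υ` of norm `2`, without moving `Λ`.

In `L(N, Λ, 3)` the vector `(r, -r, 0)` has norm `4`. In `L(Λ, N, 3)` the vector `(r, r, r)` has
norm `6`, and nothing shorter exists: three nonzero coordinates in `Υ` contribute at least `3 · 2`,
two in `Λ` at least `2 · 4`, and a single one lies in `2Υ`, where nonzero norms are at least
`4 · 2`.
-/

section EvenSelfDual

/-- The integers as a subring of `ℝ`, so that integrality of real expressions can be derived from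
closure properties. -/
abbrev realInt : Subring ℝ := (Int.castRingHom ℝ).range

lemma mem_realInt {r : ℝ} : r ∈ realInt ↔ ∃ n : ℤ, r = n := by
  simp only [RingHom.mem_range, eq_intCast, eq_comm]

lemma one_le_of_mem_realInt {r : ℝ} (hr : r ∈ realInt) (hpos : 0 < r) : 1 ≤ r := by
  obtain ⟨n, rfl⟩ := mem_realInt.1 hr
  exact_mod_cast hpos

lemma smul_mem_of_mem_realInt {L : Submodule ℤ V} {r : ℝ} {x : V} (hr : r ∈ realInt)
    (hx : x ∈ L) : r • x ∈ L := by
  obtain ⟨n, rfl⟩ := mem_realInt.1 hr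
  simpa only [Int.cast_smul_eq_zsmul] using L.smul_mem n hx

lemma mul_inner_mem_of_even {c : ℝ} {L : Submodule ℤ V}
    (hL : ∀ x ∈ L, c * ⟪x, x⟫ / 2 ∈ realInt) {x y : V} (hx : x ∈ L) (hy : y ∈ L) :
    c * ⟪x, y⟫ ∈ realInt := by
  have polar : c * ⟪x, y⟫ = c * ⟪x + y, x + y⟫ / 2 - c * ⟪x, x⟫ / 2 - c * ⟪y, y⟫ / 2 := by
    rw [real_inner_add_add_self]
    ring
  rw [polar]
  exact sub_mem (sub_mem (hL _ (add_mem hx hy)) (hL x hx)) (hL y hy)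

lemma isEvenLat_iff {L : Submodule ℤ V} : IsEvenLat L ↔ ∀ x ∈ L, ⟪x, x⟫ / 2 ∈ realInt := by
  refine ⟨fun h x hx => ?_, fun h => ⟨fun x hx y hy => ?_, fun x hx => ?_⟩⟩
  · obtain ⟨n, hn⟩ := h.2 x hx
    exact mem_realInt.2 ⟨n, by rw [hn]; ring⟩
  · simpa only [one_mul] using
      mem_realInt.1 (mul_inner_mem_of_even (c := 1) (by simpa only [one_mul] using h) hx hy)
  · obtain ⟨n, hn⟩ := mem_realInt.1 (h x hx)
    exact ⟨n, by linarith⟩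

lemma det_eq_one_of_mul_eq_one {n : Type*} [Fintype n] [DecidableEq n] {K G : Matrix n n ℤ}
    (hKG : K * G = 1) (hG : (G.map (Int.cast : ℤ → ℝ)).PosSemidef) : G.det = 1 := by
  have det_nonneg : 0 ≤ G.det := by
    have := hG.det_nonneg
    rwa [← Int.cast_det, Int.cast_nonneg_iff] at this
  have det_mul : K.det * G.det = 1 := by rw [← Matrix.det_mul, hKG, Matrix.det_one]
  exact Int.eq_one_of_mul_eq_one_left det_nonneg det_mul

/-- The rescaled lattice `√c·L` is even and contains every vector of `V` whose inner products with
it are integers. For `c > 0` and finite-dimensional `V` this says that `√c·L` is an even unimodular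
lattice, finite generation and full rank included. -/
structure IsEvenSelfDual (c : ℝ) (L : Submodule ℤ V) : Prop where
  half_norm_mem : ∀ x ∈ L, c * ⟪x, x⟫ / 2 ∈ realInt
  mem_of_inner_mem : ∀ v, (∀ x ∈ L, c * ⟪v, x⟫ ∈ realInt) → v ∈ L

namespace IsEvenSelfDual

variable {c : ℝ} {L : Submodule ℤ V}

lemma inner_mem (h : IsEvenSelfDual c L) {x y : V} (hx : x ∈ L) (hy : y ∈ L) :
    c * ⟪x, y⟫ ∈ realInt :=
  mul_inner_mem_of_even h.half_norm_mem hx hy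

lemma two_le_mul_norm (h : IsEvenSelfDual c L) (hc : 0 < c) {x : V} (hx : x ∈ L) (hx0 : x ≠ 0) :
    2 ≤ c * ⟪x, x⟫ := by
  have hpos : 0 < c * ⟪x, x⟫ := mul_pos hc (real_inner_self_pos.2 hx0)
  linarith [one_le_of_mem_realInt (h.half_norm_mem x hx) (half_pos hpos)]

lemma discreteTopology (h : IsEvenSelfDual c L) (hc : 0 < c) : DiscreteTopology L := by
  refine DiscreteTopology.of_forall_le_norm (r := √(2 / c)) (by positivity) fun x hx0 => ?_
  rw [Real.sqrt_le_left (norm_nonneg _), div_le_iff₀' hc, Submodule.coe_norm,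
    ← real_inner_self_eq_norm_sq]
  exact h.two_le_mul_norm hc x.2 (by simpa using hx0)

-- A vector `v` orthogonal to `L` has all its real multiples in `L`, where norms are quantized.
lemma span_eq_top [FiniteDimensional ℝ V] (h : IsEvenSelfDual c L) (hc : 0 < c) :
    Submodule.span ℝ (L : Set V) = ⊤ := by
  rw [← Submodule.orthogonal_eq_bot_iff, Submodule.eq_bot_iff]
  intro v hv
  by_contra hv0
  have smul_mem (t : ℝ) : t • v ∈ L := h.mem_of_inner_mem _ fun x hx => by
    have hvx : ⟪v, x⟫ = 0 := Submodule.inner_left_of_mem_orthogonal (Submodule.subset_span hx) hv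
    rw [real_inner_smul_left, hvx, mul_zero, mul_zero]
    exact zero_mem _
  have hpos : 0 < c * ⟪v, v⟫ := mul_pos hc (real_inner_self_pos.2 hv0)
  have half_mem : (2⁻¹ : ℝ) ∈ realInt := by
    have hmem := h.inner_mem (smul_mem (2 * (c * ⟪v, v⟫))⁻¹) (one_smul ℝ v ▸ smul_mem 1)
    rwa [real_inner_smul_left, mul_left_comm, mul_inv, mul_assoc, inv_mul_cancel₀ hpos.ne',
      mul_one] at hmem
  linarith [one_le_of_mem_realInt half_mem (by norm_num)]

lemma isLat [FiniteDimensional ℝ V] (h : IsEvenSelfDual c L) (hc : 0 < c) : IsLat L :=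
  have := h.discreteTopology hc
  have : IsZLattice ℝ L := ⟨h.span_eq_top hc⟩
  ⟨ZLattice.FG ℝ L, h.span_eq_top hc⟩

lemma exists_dual_vector [FiniteDimensional ℝ V] (h : IsEvenSelfDual c L) (hc : 0 < c)
    {ι : Type*} [Finite ι] [DecidableEq ι] (b : Basis ι ℤ L) (i : ι) :
    ∃ d ∈ L, ∀ j, c * ⟪d, (b j : V)⟫ = if i = j then 1 else 0 := by
  have := h.discreteTopology hc
  have : IsZLattice ℝ L := ⟨h.span_eq_top hc⟩
  let B := b.ofZLatticeBasis ℝ L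
  let d : V := c⁻¹ • (InnerProductSpace.toDual ℝ V).symm (B.coord i).toContinuousLinearMap
  have inner_d (x : V) : c * ⟪d, x⟫ = B.repr x i := by
    rw [real_inner_smul_left, mul_inv_cancel_left₀ hc.ne', InnerProductSpace.toDual_symm_apply]
    rfl
  refine ⟨d, h.mem_of_inner_mem d fun x hx => ?_, fun j => ?_⟩
  · rw [inner_d, mem_realInt]
    exact ⟨b.repr ⟨x, hx⟩ i, b.ofZLatticeBasis_repr_apply ℝ L ⟨x, hx⟩ i⟩
  · rw [inner_d, ← b.ofZLatticeBasis_apply ℝ L, Basis.repr_self, Finsupp.single_apply]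
    simp only [eq_comm]

lemma exists_basis_det_gram_eq_one [FiniteDimensional ℝ V] (h : IsEvenSelfDual c L) (hc : 0 < c) :
    ∃ (n : ℕ) (b : Basis (Fin n) ℤ L),
      (Matrix.of fun i j => c * ⟪(b i : V), (b j : V)⟫).det = 1 := by
  have := h.discreteTopology hc
  have : IsZLattice ℝ L := ⟨h.span_eq_top hc⟩
  have := ZLattice.module_free ℝ L
  have := ZLattice.module_finite ℝ L
  let b : Basis (Fin (finrank ℤ L)) ℤ L := finBasis ℤ L
  choose G hG using fun i j => mem_realInt.1 (h.inner_mem (b i).2 (b j).2)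
  choose d hdL hd using h.exists_dual_vector hc b
  let K := Matrix.of fun i j => b.repr ⟨d i, hdL i⟩ j
  have gram_eq : (Matrix.of fun i j => c * ⟪(b i : V), (b j : V)⟫) =
      (Matrix.of G).map (Int.cast : ℤ → ℝ) := Matrix.ext hG
  have hKG : K * Matrix.of G = 1 := by
    ext i j
    have d_eq : d i = ∑ k, (K i k : ℝ) • (b k : V) := by
      have := congrArg L.subtype (b.sum_repr ⟨d i, hdL i⟩).symm
      simpa only [K, Matrix.of_apply, map_sum, map_zsmul, Submodule.subtype_apply,
        Int.cast_smul_eq_zsmul] using this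
    refine Int.cast_injective (α := ℝ) ?_
    calc (((K * Matrix.of G) i j : ℤ) : ℝ)
        = ∑ k, K i k * (c * ⟪(b k : V), (b j : V)⟫) := by
          simp only [Matrix.mul_apply, Int.cast_sum, Int.cast_mul, Matrix.of_apply, hG]
      _ = c * ⟪d i, (b j : V)⟫ := by
          simp only [d_eq, sum_inner, real_inner_smul_left, Finset.mul_sum, mul_left_comm c]
      _ = ((1 : Matrix _ _ ℤ) i j : ℤ) := by
          rw [hd, Matrix.one_apply, Int.cast_ite, Int.cast_one, Int.cast_zero]
  refine ⟨_, b, ?_⟩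
  rw [gram_eq, ← Int.cast_det, det_eq_one_of_mul_eq_one hKG, Int.cast_one]
  rw [← gram_eq]
  exact (Matrix.posSemidef_gram ℝ fun i => (b i : V)).smul hc.le

lemma isUnimodularLat [FiniteDimensional ℝ V] (h : IsEvenSelfDual 1 L) : IsUnimodularLat L := by
  obtain ⟨n, b, hb⟩ := h.exists_basis_det_gram_eq_one one_pos
  exact ⟨n, b, by simpa only [one_mul] using hb⟩

lemma sqrtTwoEvenUnimod [FiniteDimensional ℝ V] (h : IsEvenSelfDual 2 L) : SqrtTwoEvenUnimod L := by
  refine ⟨fun x hx => ?_, fun x hx y hy => mem_realInt.1 (h.inner_mem hx hy),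
    h.exists_basis_det_gram_eq_one two_pos⟩
  simpa only [mul_div_cancel_left₀ _ (two_ne_zero' ℝ)] using mem_realInt.1 (h.half_norm_mem x hx)

lemma isEvenLat (h : IsEvenSelfDual 1 L) : IsEvenLat L :=
  isEvenLat_iff.2 fun x hx => by simpa only [one_mul] using h.half_norm_mem x hx

end IsEvenSelfDual

end EvenSelfDual

section Similarity

variable {W : Type*} [NormedAddCommGroup W] [InnerProductSpace ℝ W]

/-- The preimage of an additive subgroup under a real linear map. -/
def pullback (f : V →ₗ[ℝ] W) (L : Submodule ℤ W) : Submodule ℤ V :=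
  L.comap (f.restrictScalars ℤ)

lemma mem_pullback {f : V →ₗ[ℝ] W} {L : Submodule ℤ W} {x : V} : x ∈ pullback f L ↔ f x ∈ L :=
  Iff.rfl

lemma IsEvenSelfDual.pullback {c s : ℝ} {L : Submodule ℤ W} (h : IsEvenSelfDual c L) {f : V →ₗ[ℝ] W}
    (hf : Function.Surjective f) (hinner : ∀ x y, ⟪f x, f y⟫ = s * ⟪x, y⟫) :
    IsEvenSelfDual (c * s) (pullback f L) where
  half_norm_mem x hx := by
    simpa only [hinner, mul_assoc] using h.half_norm_mem (f x) hx
  mem_of_inner_mem v hv := h.mem_of_inner_mem (f v) fun y hy => by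
    obtain ⟨x, rfl⟩ := hf y
    simpa only [hinner, mul_assoc] using hv x hy

/-- The least squared norm of a nonzero vector of `L` is `r`. Unlike `minNorm L = r` this asserts
that the minimum is attained. -/
def IsMinNorm (L : Submodule ℤ V) (r : ℝ) : Prop :=
  IsLeast {r : ℝ | ∃ x ∈ L, x ≠ 0 ∧ ⟪x, x⟫ = r} r

lemma IsMinNorm.minNorm_eq {L : Submodule ℤ V} {r : ℝ} (h : IsMinNorm L r) : minNorm L = r :=
  h.csInf_eq

lemma IsMinNorm.le {L : Submodule ℤ V} {r : ℝ} (h : IsMinNorm L r) {x : V} (hx : x ∈ L)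
    (hx0 : x ≠ 0) : r ≤ ⟪x, x⟫ :=
  h.2 ⟨x, hx, hx0, rfl⟩

lemma IsMinNorm.of_le {L : Submodule ℤ V} {x : V} (hx : x ∈ L) (hx0 : x ≠ 0)
    (hle : ∀ y ∈ L, y ≠ 0 → ⟪x, x⟫ ≤ ⟪y, y⟫) : IsMinNorm L ⟪x, x⟫ :=
  ⟨⟨x, hx, hx0, rfl⟩, by rintro _ ⟨y, hy, hy0, rfl⟩; exact hle y hy hy0⟩

lemma IsMinNorm.pullback {r s : ℝ} (hs : 0 < s) {L : Submodule ℤ W} (h : IsMinNorm L r)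
    {f : V →ₗ[ℝ] W} (hf : Function.Surjective f) (hinner : ∀ x y, ⟪f x, f y⟫ = s * ⟪x, y⟫) :
    IsMinNorm (pullback f L) (r / s) := by
  obtain ⟨⟨y, hy, hy0, rfl⟩, hmin⟩ := h
  obtain ⟨x, rfl⟩ := hf y
  have norm_eq (z : V) : ⟪z, z⟫ = ⟪f z, f z⟫ / s := by rw [hinner, mul_div_cancel_left₀ _ hs.ne']
  rw [← norm_eq]
  refine .of_le hy (fun hx => hy0 (by rw [hx, map_zero])) fun z hz hz0 => ?_
  have hfz : f z ≠ 0 := by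
    rw [← inner_self_ne_zero (𝕜 := ℝ), hinner]
    exact mul_ne_zero hs.ne' (inner_self_ne_zero.2 hz0)
  rw [norm_eq x, norm_eq z]
  exact div_le_div_of_nonneg_right (hmin ⟨f z, hz, hfz, rfl⟩) hs.le

lemma IsEvenSelfDual.pullback_isometryEquiv {c : ℝ} {L : Submodule ℤ W} (h : IsEvenSelfDual c L)
    (f : V ≃ₗᵢ[ℝ] W) : IsEvenSelfDual c (_root_.pullback f.toLinearMap L) := by
  simpa only [mul_one] using h.pullback (s := 1) f.surjective fun x y => by simp

lemma IsMinNorm.pullback_isometryEquiv {r : ℝ} {L : Submodule ℤ W} (h : IsMinNorm L r)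
    (f : V ≃ₗᵢ[ℝ] W) : IsMinNorm (_root_.pullback f.toLinearMap L) r := by
  simpa only [div_one] using h.pullback one_pos f.surjective fun x y => by simp

end Similarity

section Polarization

variable {Υ M N : Submodule ℤ V}

lemma mem_two_smul_iff {x : V} : x ∈ (2 : ℤ) • Υ ↔ ∃ u ∈ Υ, (2 : ℝ) • u = x := by
  simp only [Submodule.mem_smul_pointwise_iff_exists, ofNat_smul_eq_nsmul]

namespace IsPolarization

lemma symm (hp : IsPolarization Υ M N) : IsPolarization Υ N M := by
  obtain ⟨hMΥ, hNΥ, hM, hN, hsup, hinf⟩ := hp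
  exact ⟨hNΥ, hMΥ, hN, hM, by rw [sup_comm, hsup], by rw [inf_comm, hinf]⟩

lemma left_le (hp : IsPolarization Υ M N) : M ≤ Υ := hp.1

lemma right_le (hp : IsPolarization Υ M N) : N ≤ Υ := hp.2.1

lemma mem_inf_iff (hp : IsPolarization Υ M N) {x : V} :
    x ∈ M ⊓ N ↔ ∃ u ∈ Υ, (2 : ℝ) • u = x := by
  rw [hp.2.2.2.2.2, mem_two_smul_iff]

lemma two_smul_mem_left (hp : IsPolarization Υ M N) {u : V} (hu : u ∈ Υ) : (2 : ℝ) • u ∈ M :=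
  (hp.mem_inf_iff.2 ⟨u, hu, rfl⟩).1

lemma two_smul_mem_right (hp : IsPolarization Υ M N) {u : V} (hu : u ∈ Υ) : (2 : ℝ) • u ∈ N :=
  hp.symm.two_smul_mem_left hu

lemma exists_add_eq (hp : IsPolarization Υ M N) {x : V} (hx : x ∈ Υ) :
    ∃ m ∈ M, ∃ n ∈ N, m + n = x := by
  rwa [← hp.2.2.2.2.1, Submodule.mem_sup] at hx

lemma inner_mem_left (hp : IsPolarization Υ M N) {x y : V} (hx : x ∈ M) (hy : y ∈ M) :
    ⟪x, y⟫ ∈ realInt :=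
  mem_realInt.2 (hp.2.2.1 x hx y hy)

lemma inner_mem_right (hp : IsPolarization Υ M N) {x y : V} (hx : x ∈ N) (hy : y ∈ N) :
    ⟪x, y⟫ ∈ realInt :=
  hp.symm.inner_mem_left hx hy

lemma isEvenSelfDual_right (hp : IsPolarization Υ M N) (hΥ : IsEvenSelfDual 2 Υ)
    (hN : IsEvenLat N) : IsEvenSelfDual 1 N where
  half_norm_mem x hx := by simpa only [one_mul] using isEvenLat_iff.1 hN x hx
  mem_of_inner_mem v hv := by
    simp only [one_mul] at hv
    have hvΥ : v ∈ Υ := hΥ.mem_of_inner_mem v fun u hu => by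
      simpa only [real_inner_smul_right] using hv _ (hp.two_smul_mem_right hu)
    obtain ⟨m, hm, n, hn, rfl⟩ := hp.exists_add_eq hvΥ
    have inner_m_mem (y : V) (hy : y ∈ Υ) : ⟪m, y⟫ ∈ realInt := by
      obtain ⟨m', hm', n', hn', rfl⟩ := hp.exists_add_eq hy
      have inner_m_n' : ⟪m, n'⟫ = ⟪m + n, n'⟫ - ⟪n, n'⟫ := by rw [inner_add_left]; ring
      rw [inner_add_right, inner_m_n']
      exact add_mem (hp.inner_mem_left hm hm') (sub_mem (hv n' hn') (hp.inner_mem_right hn hn'))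
    have half_m_mem : (2⁻¹ : ℝ) • m ∈ Υ := hΥ.mem_of_inner_mem _ fun y hy => by
      rw [real_inner_smul_left, mul_inv_cancel_left₀ two_ne_zero]
      exact inner_m_mem y hy
    refine add_mem ?_ hn
    simpa only [smul_inv_smul₀ (two_ne_zero' ℝ)] using hp.two_smul_mem_right half_m_mem

lemma isEvenSelfDual_left (hp : IsPolarization Υ M N) (hΥ : IsEvenSelfDual 2 Υ)
    (hM : IsEvenLat M) : IsEvenSelfDual 1 M :=
  hp.symm.isEvenSelfDual_right hΥ hM

end IsPolarization

/-- For a skew-adjoint `D`, the sublattice `{x ∈ Υ : x + D x ∈ N}`: a replacement for the second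
member of a polarization `M, N` of `Υ`, which agrees with it modulo `2Υ` up to the map `1 + D`. -/
def twist (Υ N : Submodule ℤ V) (D : V →ₗ[ℝ] V) : Submodule ℤ V :=
  Υ ⊓ pullback (LinearMap.id + D) N

lemma mem_twist_iff {D : V →ₗ[ℝ] V} {x : V} : x ∈ twist Υ N D ↔ x ∈ Υ ∧ x + D x ∈ N :=
  Iff.rfl

section Twist

variable {D : V →ₗ[ℝ] V}

lemma isEvenLat_twist (hM : IsEvenLat M) (hN : IsEvenLat N) (hD : ∀ x, ⟪x, D x⟫ = 0)
    (hDΥ : ∀ x ∈ Υ, D x ∈ M) : IsEvenLat (twist Υ N D) := by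
  rw [isEvenLat_iff] at *
  intro x ⟨hx, hxN⟩
  have norm_eq : ⟪x, x⟫ = ⟪x + D x, x + D x⟫ - ⟪D x, D x⟫ := by
    rw [real_inner_add_add_self, hD]
    ring
  rw [norm_eq, sub_div]
  exact sub_mem (hN _ hxN) (hM _ (hDΥ x hx))

lemma isPolarization_twist (hp : IsPolarization Υ M N) (hM : IsEvenLat M) (hN : IsEvenLat N)
    (hD : ∀ x, ⟪x, D x⟫ = 0) (hDΥ : ∀ x ∈ Υ, D x ∈ M) (hDM : ∀ x ∈ M, D x ∈ (2 : ℤ) • Υ) :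
    IsPolarization Υ M (twist Υ N D) := by
  have D_mem_N {x : V} (hx : x ∈ M) : D x ∈ N := by
    obtain ⟨u, hu, hux⟩ := mem_two_smul_iff.1 (hDM x hx)
    exact hux ▸ hp.two_smul_mem_right hu
  refine ⟨hp.left_le, inf_le_left, hM.1, (isEvenLat_twist hM hN hD hDΥ).1,
    le_antisymm (sup_le hp.left_le inf_le_left) fun x hx => ?_, ?_⟩
  · obtain ⟨m, hm, n, hn, rfl⟩ := hp.exists_add_eq hx
    have hDn : D n ∈ M := hDΥ n (hp.right_le hn)
    have mem_twist : n - D n ∈ twist Υ N D :=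
      mem_twist_iff.2 ⟨sub_mem (hp.right_le hn) (hp.left_le hDn), by
        have : n - D n + D (n - D n) = n - D (D n) := by rw [map_sub]; abel
        exact this ▸ sub_mem hn (D_mem_N hDn)⟩
    exact Submodule.mem_sup.2 ⟨m + D n, add_mem hm hDn, _, mem_twist, by abel⟩
  · ext x
    rw [mem_two_smul_iff, ← hp.mem_inf_iff]
    refine and_congr_right fun hxM => mem_twist_iff.trans ?_
    rw [and_iff_right (hp.left_le hxM)]
    exact N.add_mem_iff_left (D_mem_N hxM)

end Twist

/-- The Eichler transformation: skew-adjoint, and of rank at most two. -/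
def eichler (u m : V) : V →ₗ[ℝ] V :=
  (innerₗ V u).smulRight ((2 : ℝ) • m) - (innerₗ V m).smulRight ((2 : ℝ) • u)

lemma eichler_apply (u m x : V) :
    eichler u m x = (2 * ⟪u, x⟫) • m - (2 * ⟪m, x⟫) • u := by
  simp only [eichler, LinearMap.sub_apply, LinearMap.smulRight_apply, innerₗ_apply_apply, smul_smul,
    mul_comm]

lemma inner_eichler_self (u m x : V) : ⟪x, eichler u m x⟫ = 0 := by
  rw [eichler_apply, inner_sub_right, real_inner_smul_right, real_inner_smul_right,
    real_inner_comm x m, real_inner_comm x u]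
  ring

lemma eichler_mem {u m x : V} (hu : u ∈ M) (hm : m ∈ M) (hux : 2 * ⟪u, x⟫ ∈ realInt)
    (hmx : 2 * ⟪m, x⟫ ∈ realInt) : eichler u m x ∈ M := by
  rw [eichler_apply]
  exact sub_mem (smul_mem_of_mem_realInt hux hm) (smul_mem_of_mem_realInt hmx hu)

lemma eichler_mem_two_smul {u m x : V} (hu : u ∈ M) (hm : m ∈ M) (hux : ⟪u, x⟫ ∈ realInt)
    (hmx : ⟪m, x⟫ ∈ realInt) : eichler u m x ∈ (2 : ℤ) • M := by
  refine mem_two_smul_iff.2 ⟨⟪u, x⟫ • m - ⟪m, x⟫ • u,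
    sub_mem (smul_mem_of_mem_realInt hux hm) (smul_mem_of_mem_realInt hmx hu), ?_⟩
  rw [eichler_apply, smul_sub, smul_smul, smul_smul]

lemma IsPolarization.exists_two_mul_inner_eq_odd (hp : IsPolarization Υ M N)
    (hΥ : IsEvenSelfDual 2 Υ) (hM : IsEvenLat M) {v : V} (hvΥ : v ∈ Υ) (hvM : v ∉ M) :
    ∃ u ∈ M, ∃ j : ℤ, 2 * ⟪u, v⟫ = 2 * j + 1 := by
  obtain ⟨u, hu, huv⟩ : ∃ u ∈ M, ⟪u, v⟫ ∉ realInt := by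
    contrapose! hvM
    refine (hp.isEvenSelfDual_left hΥ hM).mem_of_inner_mem v fun x hx => ?_
    rw [one_mul, real_inner_comm]
    exact hvM x hx
  obtain ⟨i, hi⟩ := mem_realInt.1 (hΥ.inner_mem (hp.left_le hu) hvΥ)
  obtain ⟨j, rfl | rfl⟩ := i.even_or_odd'
  · exact absurd (mem_realInt.2 ⟨j, by push_cast at hi; linarith⟩) huv
  · exact ⟨u, hu, j, by exact_mod_cast hi⟩

-- Writing `v = k + n`, choose `u ∈ M` with `2⟪u, v⟫` odd: then `v + eichler u k v ∈ n + 2M`.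
lemma IsPolarization.exists_right_mem (hp : IsPolarization Υ M N) (hΥ : IsEvenSelfDual 2 Υ)
    (hM : IsEvenLat M) (hN : IsEvenLat N) {v : V} (hvΥ : v ∈ Υ) (hv : ⟪v, v⟫ / 2 ∈ realInt)
    (hvM : v ∉ M) : ∃ N', IsPolarization Υ M N' ∧ IsEvenLat N' ∧ v ∈ N' := by
  obtain ⟨u, hu, j, hj⟩ := hp.exists_two_mul_inner_eq_odd hΥ hM hvΥ hvM
  obtain ⟨k, hk, n, hn, hkn⟩ := hp.exists_add_eq hvΥ
  have inner_mem {x y : V} (hx : x ∈ M) (hy : y ∈ Υ) : 2 * ⟪x, y⟫ ∈ realInt :=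
    hΥ.inner_mem (hp.left_le hx) hy
  have hDΥ (x) (hx : x ∈ Υ) : eichler u k x ∈ M :=
    eichler_mem hu hk (inner_mem hu hx) (inner_mem hk hx)
  have hDM (x) (hx : x ∈ M) : eichler u k x ∈ (2 : ℤ) • Υ :=
    smul_mono_right _ hp.left_le
      (eichler_mem_two_smul hu hk (hp.inner_mem_left hu hx) (hp.inner_mem_left hk hx))
  have hkv : ⟪k, v⟫ ∈ realInt := by
    have polar : ⟪k, v⟫ = ⟪v, v⟫ / 2 + ⟪k, k⟫ / 2 - ⟪n, n⟫ / 2 := by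
      rw [← hkn, real_inner_add_add_self, inner_add_right]
      ring
    rw [polar]
    exact sub_mem (add_mem hv (isEvenLat_iff.1 hM k hk)) (isEvenLat_iff.1 hN n hn)
  have twisted_eq : v + eichler u k v = n + (2 : ℝ) • (((j + 1 : ℤ) : ℝ) • k - ⟪k, v⟫ • u) := by
    rw [eichler_apply, hj, ← hkn]
    push_cast
    module
  have mem_twist : v ∈ twist Υ N (eichler u k) := by
    rw [mem_twist_iff, twisted_eq]
    refine ⟨hvΥ, add_mem hn (hp.two_smul_mem_right (hp.left_le (sub_mem ?_ ?_)))⟩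
    exacts [smul_mem_of_mem_realInt (mem_realInt.2 ⟨_, rfl⟩) hk, smul_mem_of_mem_realInt hkv hu]
  exact ⟨_, isPolarization_twist hp hM hN (inner_eichler_self u k) hDΥ hDM,
    isEvenLat_twist hM hN (inner_eichler_self u k) hDΥ, mem_twist⟩

end Polarization

section Alpha

/-- The endomorphism `α` acts as `(1 + √-7)/2`: it satisfies `α² = α - 2`, and its adjoint is the
conjugate `1 - α`. -/
structure IsAlpha (α : V →ₗ[ℝ] V) : Prop where
  apply_apply : ∀ x, α (α x) = α x - (2 : ℝ) • x
  inner_left : ∀ x y, ⟪α x, y⟫ = ⟪x, y - α y⟫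

namespace IsAlpha

variable {α : V →ₗ[ℝ] V} {L : Submodule ℤ V}

lemma inner_map_map (hα : IsAlpha α) (x y : V) : ⟪α x, α y⟫ = 2 * ⟪x, y⟫ := by
  rw [hα.inner_left, hα.apply_apply, sub_sub_cancel, real_inner_smul_right]

lemma surjective (hα : IsAlpha α) : Function.Surjective α := fun x =>
  ⟨(2⁻¹ : ℝ) • (x - α x), by rw [map_smul, map_sub, hα.apply_apply]; module⟩

/-- The isometry `α / ᾱ = α² / 2`. -/
def divConj (α : V →ₗ[ℝ] V) : V →ₗ[ℝ] V :=
  (2⁻¹ : ℝ) • (α ∘ₗ α)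

lemma divConj_apply (α : V →ₗ[ℝ] V) (x : V) : divConj α x = (2⁻¹ : ℝ) • α (α x) :=
  rfl

lemma divConj_apply_eq (hα : IsAlpha α) (x : V) : divConj α x = (2⁻¹ : ℝ) • α x - x := by
  rw [divConj_apply, hα.apply_apply]
  module

lemma divConj_conj_apply (hα : IsAlpha α) (x : V) : divConj α (x - α x) = α x := by
  simp only [divConj_apply, map_sub, hα.apply_apply, map_smul]
  module

lemma surjective_divConj (hα : IsAlpha α) : Function.Surjective (divConj α) := fun x => by
  obtain ⟨y, rfl⟩ := hα.surjective x
  exact ⟨y - α y, hα.divConj_conj_apply y⟩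

lemma inner_divConj (hα : IsAlpha α) (x y : V) : ⟪divConj α x, divConj α y⟫ = ⟪x, y⟫ := by
  rw [divConj_apply, divConj_apply, real_inner_smul_left, real_inner_smul_right,
    hα.inner_map_map, hα.inner_map_map]
  ring

lemma isEvenSelfDual_pullback (hα : IsAlpha α) (h : IsEvenSelfDual 1 L) :
    IsEvenSelfDual 2 (pullback α L) := by
  simpa only [one_mul] using h.pullback hα.surjective hα.inner_map_map

lemma isEvenSelfDual_pullback_divConj (hα : IsAlpha α) (h : IsEvenSelfDual 1 L) :
    IsEvenSelfDual 1 (pullback (divConj α) L) := by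
  simpa only [one_mul] using
    h.pullback (s := 1) hα.surjective_divConj fun x y => by rw [hα.inner_divConj, one_mul]

lemma map_mem_pullback_divConj (hstable : ∀ x ∈ L, α x ∈ L) {x : V}
    (hx : x ∈ pullback (divConj α) L) : α x ∈ pullback (divConj α) L := by
  have commute : divConj α (α x) = α (divConj α x) := by simp only [divConj_apply, map_smul]
  rw [mem_pullback, commute]
  exact hstable _ hx

lemma pullback_divConj_le (hα : IsAlpha α) (hstable : ∀ x ∈ L, α x ∈ L) :
    pullback (divConj α) L ≤ pullback α L := fun x hx => by
  have eq : α x = divConj α x - α (divConj α x) := by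
    simp only [hα.divConj_apply_eq, map_sub, map_smul, hα.apply_apply]
    module
  rw [mem_pullback, eq]
  exact sub_mem hx (hstable _ hx)

lemma inf_pullback_divConj (hα : IsAlpha α) (hstable : ∀ x ∈ L, α x ∈ L) :
    L ⊓ pullback (divConj α) L = (2 : ℤ) • pullback α L := by
  ext x
  rw [mem_two_smul_iff, Submodule.mem_inf, mem_pullback]
  constructor
  · rintro ⟨hx, hdiv⟩
    refine ⟨(2⁻¹ : ℝ) • x, ?_, smul_inv_smul₀ two_ne_zero x⟩
    have eq : α ((2⁻¹ : ℝ) • x) = divConj α x + x := by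
      rw [hα.divConj_apply_eq, map_smul, sub_add_cancel]
    rw [mem_pullback, eq]
    exact add_mem hdiv hx
  · rintro ⟨u, hu, rfl⟩
    have two_smul_eq : (2 : ℝ) • u = α u - α (α u) := by rw [hα.apply_apply, sub_sub_cancel]
    have divConj_eq : divConj α ((2 : ℝ) • u) = α (α u) := by
      rw [divConj_apply, map_smul, map_smul, inv_smul_smul₀ two_ne_zero]
    rw [divConj_eq, two_smul_eq]
    exact ⟨sub_mem hu (hstable _ hu), hstable _ hu⟩

-- With `Υ = α⁻¹L` these are `L = αΥ` and `(ᾱ/α)L = ᾱΥ`, which add up to `Υ` because `α + ᾱ = 1`.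
lemma isPolarization (hα : IsAlpha α) (hL : IsIntegralLat L) (hstable : ∀ x ∈ L, α x ∈ L) :
    IsPolarization (pullback α L) L (pullback (divConj α) L) := by
  refine ⟨hstable, hα.pullback_divConj_le hstable, hL, fun x hx y hy => ?_,
    le_antisymm (sup_le hstable (hα.pullback_divConj_le hstable)) fun x hx => ?_,
    hα.inf_pullback_divConj hstable⟩
  · rw [← hα.inner_divConj]
    exact hL _ hx _ hy
  · refine Submodule.mem_sup.2 ⟨α x, hx, x - α x, ?_, add_sub_cancel _ _⟩
    rwa [mem_pullback, hα.divConj_conj_apply]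

end IsAlpha

end Alpha

section Construction

variable {Υ M N : Submodule ℤ V} {k : ℕ}

lemma IsPolarization.mem_LMN_iff (hp : IsPolarization Υ M N) {v : PiLp 2 fun _ : Fin k => V} :
    v ∈ LMN M N k ↔ (∀ i, v i ∈ Υ) ∧ (∀ i j, v i - v j ∈ M) ∧ ∑ i, v i ∈ N := by
  rw [LMN, Submodule.mem_sup]
  constructor
  · rintro ⟨a, ⟨ha, hsum⟩, b, ⟨y, hy, hb⟩, rfl⟩
    simp only [PiLp.add_apply, hb, add_sub_add_right_eq_sub, Finset.sum_add_distrib,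
      Finset.sum_const]
    exact ⟨fun i => add_mem (hp.left_le (ha i)) (hp.right_le hy), fun i j => sub_mem (ha i) (ha j),
      add_mem hsum.2 (nsmul_mem hy _)⟩
  · rintro ⟨hΥ, hdiff, hsum⟩
    obtain ⟨n, hn, hvn⟩ : ∃ n ∈ N, ∀ i, v i - n ∈ M := by
      obtain _ | ⟨⟨i₀⟩⟩ := isEmpty_or_nonempty (Fin k)
      · exact ⟨0, zero_mem N, isEmptyElim⟩
      obtain ⟨m, hm, n, hn, hmn⟩ := hp.exists_add_eq (hΥ i₀)
      refine ⟨n, hn, fun i => ?_⟩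
      have eq : v i - n = (v i - v i₀) + m := by rw [← hmn]; abel
      exact eq ▸ add_mem (hdiff i i₀) hm
    have sum_mem_N : ∑ i, (v i - n) ∈ N := by
      rw [Finset.sum_sub_distrib, Finset.sum_const]
      exact sub_mem hsum (nsmul_mem hn _)
    exact ⟨WithLp.toLp 2 fun i => v i - n, ⟨hvn, sum_mem fun i _ => hvn i, sum_mem_N⟩,
      WithLp.toLp 2 fun _ => n, ⟨n, hn, fun _ => rfl⟩, PiLp.ext fun i => sub_add_cancel (v i) n⟩

lemma isEvenLat_LsubM (hM : IsEvenLat M) : IsEvenLat (LsubM M N k) := by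
  rw [isEvenLat_iff] at *
  intro v hv
  rw [PiLp.inner_apply, Finset.sum_div]
  exact sum_mem fun i _ => hM _ (hv.1 i)

lemma isEvenLat_LsupN (hN : IsEvenLat N) : IsEvenLat (LsupN N k) := by
  rw [isEvenLat_iff] at *
  rintro v ⟨y, hy, hv⟩
  simp only [PiLp.inner_apply, Finset.sum_div, hv]
  exact sum_mem fun i _ => hN y hy

lemma IsEvenLat.sup {A B : Submodule ℤ V} (hA : IsEvenLat A) (hB : IsEvenLat B)
    (hAB : ∀ a ∈ A, ∀ b ∈ B, ⟪a, b⟫ ∈ realInt) : IsEvenLat (A ⊔ B) := by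
  rw [isEvenLat_iff] at *
  intro x hx
  obtain ⟨a, ha, b, hb, rfl⟩ := Submodule.mem_sup.1 hx
  have norm_eq : ⟪a + b, a + b⟫ / 2 = ⟪a, a⟫ / 2 + ⟪a, b⟫ + ⟪b, b⟫ / 2 := by
    rw [real_inner_add_add_self]
    ring
  rw [norm_eq]
  exact add_mem (add_mem (hA a ha) (hAB a ha b hb)) (hB b hb)

lemma isEvenLat_LMN (hM : IsEvenLat M) (hN : IsEvenLat N) : IsEvenLat (LMN M N k) := by
  refine (isEvenLat_LsubM hM).sup (isEvenLat_LsupN hN) ?_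
  rintro a ⟨-, hsum⟩ b ⟨y, hy, hb⟩
  simp only [PiLp.inner_apply, hb, ← sum_inner]
  exact mem_realInt.2 (hN.1 _ hsum.2 _ hy)

lemma inner_piLp_single {ι : Type*} [Fintype ι] [DecidableEq ι] (v : PiLp 2 fun _ : ι => V) (i : ι)
    (x : V) : ⟪v, PiLp.single 2 i x⟫ = ⟪v i, x⟫ := by
  rw [PiLp.inner_apply, Finset.sum_eq_single i, PiLp.single_eq_same]
  · intro j _ hji
    rw [PiLp.single_eq_of_ne _ hji, inner_zero_right]
  · exact fun hi => absurd (Finset.mem_univ i) hi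

lemma pi_single_apply_mem {E ι : Type*} [AddCommGroup E] [DecidableEq ι] {S : Submodule ℤ E} {x : E}
    (hx : x ∈ S) (i j : ι) : (Pi.single i x : ι → E) j ∈ S := by
  by_cases hij : j = i
  · rwa [hij, Pi.single_eq_same]
  · rw [Pi.single_eq_of_ne hij]
    exact zero_mem S

lemma single_sub_single_mem_LsubM {E : Type*} [NormedAddCommGroup E] {M N : Submodule ℤ E} {k : ℕ}
    (i j : Fin k) {x : E} (hx : x ∈ M) :
    PiLp.single 2 i x - PiLp.single 2 j x ∈ LsubM M N k := by
  refine ⟨fun l => sub_mem (pi_single_apply_mem hx i l) (pi_single_apply_mem hx j l), ?_⟩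
  simp only [PiLp.sub_apply, PiLp.ofLp_single, Finset.sum_sub_distrib, Finset.sum_pi_single',
    Finset.mem_univ, if_true, sub_self]
  exact zero_mem _

lemma IsPolarization.single_two_smul_mem_LsubM (hp : IsPolarization Υ M N) (i : Fin k) {u : V}
    (hu : u ∈ Υ) : PiLp.single 2 i ((2 : ℝ) • u) ∈ LsubM M N k := by
  refine ⟨pi_single_apply_mem (hp.two_smul_mem_left hu) i, ?_⟩
  simp only [PiLp.ofLp_single, Finset.sum_pi_single', Finset.mem_univ, if_true]
  exact hp.mem_inf_iff.2 ⟨u, hu, rfl⟩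

lemma IsPolarization.isEvenSelfDual_LMN (hp : IsPolarization Υ M N) (hΥ : IsEvenSelfDual 2 Υ)
    (hM : IsEvenLat M) (hN : IsEvenLat N) : IsEvenSelfDual 1 (LMN M N k) where
  half_norm_mem v hv := by
    simpa only [one_mul] using isEvenLat_iff.1 (isEvenLat_LMN hM hN) v hv
  mem_of_inner_mem v hv := by
    simp only [one_mul] at hv
    rw [hp.mem_LMN_iff]
    refine ⟨fun i => hΥ.mem_of_inner_mem _ fun u hu => ?_, fun i j => ?_, ?_⟩
    · simpa only [inner_piLp_single, real_inner_smul_right] using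
        hv _ (Submodule.mem_sup_left (hp.single_two_smul_mem_LsubM i hu))
    · refine (hp.isEvenSelfDual_left hΥ hM).mem_of_inner_mem _ fun x hx => ?_
      simpa only [inner_sub_right, inner_piLp_single, one_mul, inner_sub_left] using
        hv _ (Submodule.mem_sup_left (single_sub_single_mem_LsubM i j hx))
    · refine (hp.isEvenSelfDual_right hΥ hN).mem_of_inner_mem _ fun y hy => ?_
      have mem : WithLp.toLp 2 (fun _ => y) ∈ LMN M N k :=
        Submodule.mem_sup_right ⟨y, hy, fun _ => rfl⟩
      simpa only [PiLp.inner_apply, one_mul, sum_inner] using hv _ mem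

-- Either all coordinates of `v` are nonzero vectors of `Υ`, or all of them lie in `M`; if then only
-- one of them is nonzero, it lies in `M ∩ N = 2Υ`.
lemma IsPolarization.le_norm_of_mem_LMN (hp : IsPolarization Υ M N) {c ν μ : ℝ}
    (hν : ∀ x ∈ Υ, x ≠ 0 → ν ≤ ⟪x, x⟫) (hμ : ∀ x ∈ M, x ≠ 0 → μ ≤ ⟪x, x⟫) (hkν : c ≤ k * ν)
    (h2μ : c ≤ 2 * μ) (h4ν : c ≤ 4 * ν) {v : PiLp 2 fun _ : Fin k => V} (hv : v ∈ LMN M N k)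
    (hv0 : v ≠ 0) : c ≤ ⟪v, v⟫ := by
  obtain ⟨hvΥ, hdiff, hsum⟩ := hp.mem_LMN_iff.1 hv
  rw [PiLp.inner_apply]
  by_cases hall : ∀ i, v i ≠ 0
  · calc c ≤ ∑ _i : Fin k, ν := by simpa using hkν
      _ ≤ ∑ i, ⟪v i, v i⟫ := Finset.sum_le_sum fun i _ => hν _ (hvΥ i) (hall i)
  obtain ⟨i₀, hi₀⟩ := not_forall_not.1 hall
  have hvM (i) : v i ∈ M := by simpa only [hi₀, sub_zero] using hdiff i i₀
  obtain ⟨i, hi⟩ : ∃ i, v i ≠ 0 := by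
    contrapose! hv0
    exact PiLp.ext hv0
  by_cases hother : ∃ j ≠ i, v j ≠ 0
  · obtain ⟨j, hji, hj⟩ := hother
    calc c ≤ ⟪v i, v i⟫ + ⟪v j, v j⟫ := by linarith [hμ _ (hvM i) hi, hμ _ (hvM j) hj]
      _ ≤ ∑ l, ⟪v l, v l⟫ := Finset.add_le_sum (fun _ _ => real_inner_self_nonneg)
          (Finset.mem_univ i) (Finset.mem_univ j) hji.symm
  · push Not at hother
    rw [Finset.sum_eq_single i (fun j _ => hother j) (by simp)] at hsum
    obtain ⟨u, hu, hui⟩ := hp.mem_inf_iff.1 ⟨hvM i, hsum⟩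
    have hu0 : u ≠ 0 := by
      rintro rfl
      exact hi (by rw [← hui, smul_zero])
    calc c ≤ ⟪v i, v i⟫ := by
          rw [← hui, real_inner_smul_left, real_inner_smul_right]
          linarith [hν u hu hu0]
      _ ≤ ∑ l, ⟪v l, v l⟫ :=
          Finset.single_le_sum (fun _ _ => real_inner_self_nonneg) (Finset.mem_univ i)

lemma IsPolarization.isMinNorm_LMN_of_root_left (hp : IsPolarization Υ M N)
    (hΥ : IsEvenSelfDual 2 Υ) (hM : IsEvenLat M) (hN : IsEvenLat N) (hk : 3 ≤ k) {r : V}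
    (hr : r ∈ M) (hr2 : ⟪r, r⟫ = 2) : IsMinNorm (LMN M N k) 4 := by
  let i : Fin k := ⟨0, by lia⟩
  let j : Fin k := ⟨1, by lia⟩
  have hij : i ≠ j := by simp [i, j]
  let w : PiLp 2 fun _ : Fin k => V := PiLp.single 2 i r - PiLp.single 2 j r
  have hw : w ∈ LMN M N k := Submodule.mem_sup_left (single_sub_single_mem_LsubM i j hr)
  have hw4 : ⟪w, w⟫ = 4 := by
    simp only [w, inner_sub_right, inner_piLp_single, PiLp.single_eq_same,
      PiLp.single_eq_of_ne _ hij, PiLp.single_eq_of_ne _ hij.symm, inner_sub_left, hr2,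
      inner_zero_left]
    norm_num
  have hw0 : w ≠ 0 := by
    rw [← inner_self_ne_zero (𝕜 := ℝ), hw4]
    norm_num
  refine hw4 ▸ .of_le hw hw0 fun v hv hv0 => ?_
  have three_le : 3 ≤ ⟪v, v⟫ := by
    refine hp.le_norm_of_mem_LMN (ν := 1) (μ := 2) (fun x hx hx0 => ?_) (fun x hx hx0 => ?_) ?_
      (by norm_num) (by norm_num) hv hv0
    · linarith [hΥ.two_le_mul_norm two_pos hx hx0]
    · linarith [(hp.isEvenSelfDual_left hΥ hM).two_le_mul_norm one_pos hx hx0]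
    · rw [mul_one]
      exact_mod_cast hk
  have half_mem : ⟪v, v⟫ / 2 ∈ realInt := isEvenLat_iff.1 (isEvenLat_LMN hM hN) v hv
  have := one_le_of_mem_realInt (sub_mem half_mem (one_mem _)) (by linarith)
  rw [hw4]
  linarith

lemma IsPolarization.isMinNorm_LMN_of_root_right (hp : IsPolarization Υ M N)
    (hΥ : ∀ x ∈ Υ, x ≠ 0 → 2 ≤ ⟪x, x⟫) (hM : ∀ x ∈ M, x ≠ 0 → 4 ≤ ⟪x, x⟫) (hk0 : k ≠ 0)
    (hk4 : k ≤ 4) {r : V} (hr : r ∈ N) (hr2 : ⟪r, r⟫ = 2) : IsMinNorm (LMN M N k) (2 * k) := by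
  let w : PiLp 2 fun _ : Fin k => V := WithLp.toLp 2 fun _ => r
  have hw : w ∈ LMN M N k := Submodule.mem_sup_right ⟨r, hr, fun _ => rfl⟩
  have hwk : ⟪w, w⟫ = 2 * k := by
    simp only [w, PiLp.inner_apply, hr2, Finset.sum_const, Finset.card_univ, Fintype.card_fin,
      nsmul_eq_mul, mul_comm]
  have hw0 : w ≠ 0 := by
    rw [← inner_self_ne_zero (𝕜 := ℝ), hwk]
    positivity
  have hk4' : (k : ℝ) ≤ 4 := by exact_mod_cast hk4
  refine hwk ▸ .of_le hw hw0 fun v hv hv0 => ?_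
  rw [hwk]
  exact hp.le_norm_of_mem_LMN hΥ hM (by linarith) (by linarith) (by linarith) hv hv0

/-- The diagonal action of an endomorphism of `V` on `V^k`. -/
def diagMap (k : ℕ) (f : V →ₗ[ℝ] V) :
    (PiLp 2 fun _ : Fin k => V) →ₗ[ℝ] PiLp 2 fun _ : Fin k => V where
  toFun v := WithLp.toLp 2 fun i => f (v i)
  map_add' v w := PiLp.ext fun i => f.map_add (v i) (w i)
  map_smul' c v := PiLp.ext fun i => f.map_smul c (v i)

lemma diagMap_apply (f : V →ₗ[ℝ] V) (v : PiLp 2 fun _ : Fin k => V) (i : Fin k) :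
    diagMap k f v i = f (v i) :=
  rfl

lemma IsAlpha.diagMap {α : V →ₗ[ℝ] V} (hα : IsAlpha α) (k : ℕ) : IsAlpha (diagMap k α) where
  apply_apply v := PiLp.ext fun i => hα.apply_apply (v i)
  inner_left v w := by
    simp only [PiLp.inner_apply, PiLp.sub_apply, diagMap_apply, hα.inner_left]

lemma diagMap_mem_LMN {f : V →ₗ[ℝ] V} (hM : ∀ x ∈ M, f x ∈ M) (hN : ∀ x ∈ N, f x ∈ N) :
    ∀ v ∈ LMN M N k, diagMap k f v ∈ LMN M N k := by
  change LMN M N k ≤ pullback (diagMap k f) (LMN M N k)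
  refine sup_le ?_ ?_
  · rintro v ⟨hv, hsum⟩
    refine Submodule.mem_sup_left ⟨fun i => hM _ (hv i), ?_⟩
    have sum_eq : ∑ i, diagMap k f v i = f (∑ i, v i) := (map_sum f _ _).symm
    exact Set.mem_of_eq_of_mem sum_eq ⟨hM _ hsum.1, hN _ hsum.2⟩
  · rintro v ⟨y, hy, hv⟩
    exact Submodule.mem_sup_right ⟨f y, hN y hy, fun i => congrArg f (hv i)⟩

end Construction

section DPlus

variable {ι : Type*} [Fintype ι]

/-- The group `D_n⁺`: the vectors of `ℝ^n` that differ from an integral multiple of the glue vector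
`(½,…,½)` by an integral vector with even coordinate sum. -/
def dPlus (ι : Type*) [Fintype ι] : Submodule ℤ (EuclideanSpace ℝ ι) where
  carrier := {x | ∃ (t : ℤ) (z : ι → ℤ), Even (∑ i, z i) ∧ ∀ i, x i = t / 2 + z i}
  add_mem' := by
    rintro x y ⟨t, z, hz, hx⟩ ⟨t', z', hz', hy⟩
    refine ⟨t + t', z + z', ?_, fun i => ?_⟩
    · simpa only [Pi.add_apply, Finset.sum_add_distrib] using hz.add hz'
    · rw [PiLp.add_apply, hx, hy, Pi.add_apply]
      push_cast
      ring
  zero_mem' := ⟨0, 0, by simp, by simp⟩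
  smul_mem' := by
    rintro n x ⟨t, z, hz, hx⟩
    refine ⟨n * t, n • z, ?_, fun i => ?_⟩
    · simpa only [Pi.smul_apply, smul_eq_mul, ← Finset.mul_sum] using hz.mul_left n
    · rw [PiLp.smul_apply, hx, zsmul_eq_mul, Pi.smul_apply, smul_eq_mul]
      push_cast
      ring

lemma toLp_intCast_mem_dPlus {z : ι → ℤ} (hz : Even (∑ i, z i)) :
    WithLp.toLp 2 (fun i => (z i : ℝ)) ∈ dPlus ι :=
  ⟨0, z, hz, fun i => by simp⟩

lemma even_sum_sq_iff (z : ι → ℤ) : Even (∑ i, z i ^ 2) ↔ Even (∑ i, z i) := by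
  rw [← Int.even_sub, ← Finset.sum_sub_distrib]
  refine Finset.even_sum _ fun i _ => ?_
  rw [sq, ← mul_sub_one]
  exact Int.even_mul_pred_self (z i)

lemma half_norm_mem_of_mem_dPlus (hcard : 8 ∣ Fintype.card ι) {x : EuclideanSpace ℝ ι}
    (hx : x ∈ dPlus ι) : ⟪x, x⟫ / 2 ∈ realInt := by
  obtain ⟨m, hm⟩ := hcard
  obtain ⟨t, z, hz, hx⟩ := hx
  obtain ⟨b, hb⟩ := (even_sum_sq_iff z).2 hz
  obtain ⟨a, ha⟩ := hz
  refine mem_realInt.2 ⟨m * t ^ 2 + t * a + b, ?_⟩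
  have norm_eq : ⟪x, x⟫ = Fintype.card ι * (t / 2 : ℝ) ^ 2 + t * (∑ i, z i : ℤ) +
      (∑ i, z i ^ 2 : ℤ) := by
    calc ⟪x, x⟫ = ∑ i, ((t / 2 : ℝ) ^ 2 + t * z i + z i ^ 2) := by
          simp only [PiLp.inner_apply, hx, real_inner_self_eq_norm_sq, Real.norm_eq_abs, sq_abs]
          exact Finset.sum_congr rfl fun i _ => by ring
      _ = _ := by
          simp only [Finset.sum_add_distrib, Finset.sum_const, Finset.card_univ, nsmul_eq_mul,
            ← Finset.mul_sum, Int.cast_sum, Int.cast_pow]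
  rw [norm_eq, ha, hb, hm]
  push_cast
  ring

lemma mem_dPlus_of_inner_mem [Nonempty ι] (hcard : 8 ∣ Fintype.card ι) {v : EuclideanSpace ℝ ι}
    (hv : ∀ x ∈ dPlus ι, ⟪v, x⟫ ∈ realInt) : v ∈ dPlus ι := by
  classical
  obtain ⟨m, hm⟩ := hcard
  let i₀ : ι := Classical.arbitrary ι
  have int_mem (z : ι → ℤ) (hz : Even (∑ i, z i)) : ∑ i, z i * v i ∈ realInt := by
    simpa [PiLp.inner_apply] using hv _ (toLp_intCast_mem_dPlus hz)
  obtain ⟨t, ht⟩ : ∃ t : ℤ, 2 * v i₀ = t := mem_realInt.1 <| by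
    simpa [Pi.single_apply] using int_mem (Pi.single i₀ 2) (by simp)
  have sub_mem (i : ι) : ∃ n : ℤ, v i - v i₀ = n := mem_realInt.1 <| by
    simpa [Pi.single_apply, sub_mul, Finset.sum_sub_distrib] using
      int_mem (fun j => (if j = i then 1 else 0) - if j = i₀ then 1 else 0) (by simp)
  choose z hz using sub_mem
  obtain ⟨s, hs⟩ : ∃ s : ℤ, ∑ i, v i = 2 * s := by
    obtain ⟨s, hs⟩ := mem_realInt.1 (hv (WithLp.toLp 2 fun _ => 1 / 2) ⟨1, 0, by simp, by simp⟩)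
    refine ⟨s, ?_⟩
    simp only [PiLp.inner_apply, RCLike.inner_apply, conj_trivial, ← Finset.mul_sum] at hs
    linarith
  have v_eq (i : ι) : v i = t / 2 + z i := by linarith [hz i]
  refine ⟨t, z, ⟨s - 2 * m * t, ?_⟩, v_eq⟩
  simp only [v_eq, Finset.sum_add_distrib, Finset.sum_const, Finset.card_univ, hm,
    nsmul_eq_mul] at hs
  push_cast at hs
  have : (∑ i, z i : ℝ) = 2 * (s - 2 * m * t) := by linarith
  rw [← two_mul]
  exact_mod_cast this

lemma isEvenSelfDual_dPlus [Nonempty ι] (hcard : 8 ∣ Fintype.card ι) :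
    IsEvenSelfDual 1 (dPlus ι) where
  half_norm_mem x hx := by simpa only [one_mul] using half_norm_mem_of_mem_dPlus hcard hx
  mem_of_inner_mem v hv := mem_dPlus_of_inner_mem hcard (by simpa only [one_mul] using hv)

/-- The endomorphism `½H` of `ℝ^n` attached to an integral matrix `H`. -/
def halfLin [DecidableEq ι] (H : Matrix ι ι ℤ) : EuclideanSpace ℝ ι →ₗ[ℝ] EuclideanSpace ℝ ι :=
  ((2⁻¹ : ℝ) • H.map Int.cast).toEuclideanLin

lemma halfLin_apply [DecidableEq ι] (H : Matrix ι ι ℤ) (x : EuclideanSpace ℝ ι) (i : ι) :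
    halfLin H x i = 2⁻¹ * ∑ j, (H i j : ℝ) * x j := by
  simp [halfLin, Matrix.mulVec, dotProduct]

lemma isAlpha_toEuclideanLin [DecidableEq ι] {A : Matrix ι ι ℝ} (hmul : A * A = A - (2 : ℝ) • 1)
    (hadj : A.conjTranspose = 1 - A) : IsAlpha A.toEuclideanLin where
  apply_apply x := by
    have := congrArg (fun B : Matrix ι ι ℝ => B.toEuclideanLin x) hmul
    simpa [Matrix.toLpLin_mul_same] using this
  inner_left x y := by
    rw [← LinearMap.adjoint_inner_right, ← Matrix.toEuclideanLin_conjTranspose_eq_adjoint, hadj]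
    simp

lemma isAlpha_halfLin [DecidableEq ι] {H : Matrix ι ι ℤ} (hmul : H * H = (2 : ℤ) • H - (8 : ℤ) • 1)
    (htranspose : H.transpose = (2 : ℤ) • 1 - H) : IsAlpha (halfLin H) := by
  refine isAlpha_toEuclideanLin ?_ ?_
  · have hmul_real := congrArg (Int.castRingHom ℝ).mapMatrix hmul
    simp only [map_mul, map_sub, map_zsmul, map_one, RingHom.mapMatrix_apply,
      Int.coe_castRingHom] at hmul_real
    rw [smul_mul_smul_comm, hmul_real]
    module
  · have htranspose_real := congrArg (Int.castRingHom ℝ).mapMatrix htranspose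
    simp only [map_sub, map_zsmul, map_one, RingHom.mapMatrix_apply, Int.coe_castRingHom,
      Matrix.transpose_map] at htranspose_real
    rw [Matrix.conjTranspose_smul, Matrix.conjTranspose_eq_transpose_of_trivial, htranspose_real,
      star_trivial]
    module

lemma even_sum_mul_iff {a : ι → ℤ} (ha : ∀ i, Odd (a i)) (z : ι → ℤ) :
    Even (∑ i, a i * z i) ↔ Even (∑ i, z i) := by
  rw [← Int.even_sub, ← Finset.sum_sub_distrib]
  refine Finset.even_sum _ fun i _ => ?_
  rw [← sub_one_mul]
  exact ((ha i).sub_odd odd_one).mul_right _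

lemma halfLin_mem_dPlus [DecidableEq ι] {H : Matrix ι ι ℤ} (hodd : ∀ i j, Odd (H i j))
    (hrow : ∀ i, 4 ∣ ∑ j, H i j) (hcol : ∀ j, 4 ∣ (∑ i, H i j) - 2)
    (hsum : 8 ∣ ∑ i, ∑ j, H i j) {x : EuclideanSpace ℝ ι} (hx : x ∈ dPlus ι) :
    halfLin H x ∈ dPlus ι := by
  obtain ⟨t, z, hz, hx⟩ := hx
  choose r hr using hrow
  choose c hc using hcol
  have row_even (i : ι) : 2 ∣ ∑ j, H i j * z j := by
    rw [← even_iff_two_dvd, even_sum_mul_iff (hodd i)]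
    exact hz
  choose u hu using row_even
  have even_sum_r : Even (∑ i, r i) := by
    simp only [hr, ← Finset.mul_sum] at hsum
    rw [even_iff_two_dvd]
    omega
  have even_sum_u : Even (∑ i, u i) := by
    have sum_eq : ∑ i, u i = 2 * ∑ j, c j * z j + ∑ j, z j := by
      refine mul_left_cancel₀ two_ne_zero ?_
      calc 2 * ∑ i, u i = ∑ j, (∑ i, H i j) * z j := by
            simp only [Finset.mul_sum, Finset.sum_mul, ← hu]
            exact Finset.sum_comm
        _ = ∑ j, (2 * (2 * (c j * z j)) + 2 * z j) :=
            Finset.sum_congr rfl fun j _ => by linear_combination z j * hc j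
        _ = 2 * (2 * ∑ j, c j * z j + ∑ j, z j) := by
            simp only [Finset.sum_add_distrib, Finset.mul_sum, mul_add]
    exact sum_eq ▸ (even_two_mul _).add hz
  refine ⟨0, t • r + u, ?_, fun i => ?_⟩
  · simpa [Finset.sum_add_distrib, ← Finset.mul_sum] using (even_sum_r.mul_left t).add even_sum_u
  · have row_eq : ∑ j, (H i j : ℝ) * x j = t / 2 * (∑ j, H i j : ℤ) + (∑ j, H i j * z j : ℤ) := by
      push_cast
      simp only [hx, mul_add, Finset.sum_add_distrib, Finset.mul_sum, mul_comm]
    rw [halfLin_apply, row_eq, hr, hu, Pi.add_apply, Pi.smul_apply, smul_eq_mul]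
    push_cast
    ring

end DPlus

section Leech

variable {α : V →ₗ[ℝ] V} {L : Submodule ℤ V}

/-- The skew Hadamard matrix of order `8` that borders the circulant matrix of quadratic residues
modulo `7`. -/
def skewHadamard : Matrix (Fin 8) (Fin 8) ℤ :=
  !![ 1,  1,  1, -1,  1, -1, -1, -1;
     -1,  1,  1,  1, -1,  1, -1, -1;
     -1, -1,  1,  1,  1, -1,  1, -1;
      1, -1, -1,  1,  1,  1, -1, -1;
     -1,  1, -1, -1,  1,  1,  1, -1;
      1, -1,  1, -1, -1,  1,  1, -1;
      1,  1, -1,  1, -1, -1,  1, -1;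
      1,  1,  1,  1,  1,  1,  1,  1]

lemma isAlpha_halfLin_skewHadamard : IsAlpha (halfLin skewHadamard) :=
  isAlpha_halfLin (by decide) (by decide)

lemma halfLin_skewHadamard_mem_dPlus :
    ∀ x ∈ dPlus (Fin 8), halfLin skewHadamard x ∈ dPlus (Fin 8) := fun _ =>
  halfLin_mem_dPlus (by simp only [Int.odd_iff]; decide) (by decide) (by decide) (by decide)

lemma exists_root_mem_dPlus : ∃ r ∈ dPlus (Fin 8), ⟪r, r⟫ = 2 := by
  refine ⟨_, toLp_intCast_mem_dPlus (z := ![1, 1, 0, 0, 0, 0, 0, 0]) (by decide), ?_⟩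
  rw [PiLp.inner_apply]
  norm_num [Fin.sum_univ_succ]

/-- Turyn's construction of the Leech lattice from the polarization `L, (ᾱ/α)L`. -/
def turyn (α : V →ₗ[ℝ] V) (L : Submodule ℤ V) : Submodule ℤ (PiLp 2 fun _ : Fin 3 => V) :=
  LMN L (pullback (IsAlpha.divConj α) L) 3

namespace IsAlpha

lemma isEvenSelfDual_turyn (hα : IsAlpha α) (h : IsEvenSelfDual 1 L)
    (hstable : ∀ x ∈ L, α x ∈ L) : IsEvenSelfDual 1 (turyn α L) :=
  (hα.isPolarization h.isEvenLat.1 hstable).isEvenSelfDual_LMN (hα.isEvenSelfDual_pullback h)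
    h.isEvenLat (hα.isEvenSelfDual_pullback_divConj h).isEvenLat

lemma isMinNorm_turyn (hα : IsAlpha α) (h : IsEvenSelfDual 1 L)
    (hstable : ∀ x ∈ L, α x ∈ L) {r : V} (hr : r ∈ L) (hr2 : ⟪r, r⟫ = 2) :
    IsMinNorm (turyn α L) 4 :=
  (hα.isPolarization h.isEvenLat.1 hstable).isMinNorm_LMN_of_root_left
    (hα.isEvenSelfDual_pullback h) h.isEvenLat (hα.isEvenSelfDual_pullback_divConj h).isEvenLat
    le_rfl hr hr2

lemma conj {W : Type*} [NormedAddCommGroup W] [InnerProductSpace ℝ W] (hα : IsAlpha α)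
    (f : W ≃ₗᵢ[ℝ] V) : IsAlpha (f.symm.toLinearMap ∘ₗ α ∘ₗ f.toLinearMap) where
  apply_apply x := by
    simp [hα.apply_apply]
  inner_left x y := by
    simp [LinearIsometryEquiv.inner_map_eq_flip, hα.inner_left]

lemma exists_polarization_of_isMinNorm_four (hα : IsAlpha α) (h : IsEvenSelfDual 1 L)
    (hstable : ∀ x ∈ L, α x ∈ L) (hmin : IsMinNorm L 4) :
    ∃ Υ N : Submodule ℤ V, IsEvenSelfDual 2 Υ ∧ IsMinNorm Υ 2 ∧ IsPolarization Υ L N ∧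
      IsEvenLat N ∧ ∃ r ∈ N, ⟪r, r⟫ = 2 := by
  have hΥ : IsEvenSelfDual 2 (pullback α L) := hα.isEvenSelfDual_pullback h
  have hΥmin : IsMinNorm (pullback α L) 2 := by
    convert hmin.pullback two_pos hα.surjective hα.inner_map_map
    norm_num
  obtain ⟨v, hv, hv0, hv2⟩ := hΥmin.1
  have hvL : v ∉ L := fun hvL => by linarith [hmin.le hvL hv0]
  obtain ⟨N, hp, hN, hvN⟩ := (hα.isPolarization h.isEvenLat.1 hstable).exists_right_mem hΥ
    h.isEvenLat (hα.isEvenSelfDual_pullback_divConj h).isEvenLat hv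
    (by rw [hv2, div_self two_ne_zero]; exact one_mem _) hvL
  exact ⟨_, N, hΥ, hΥmin, hp, hN, v, hvN, hv2⟩

end IsAlpha

lemma nonempty_linearIsometryEquiv_piLp (k n : ℕ) :
    Nonempty (EuclideanSpace ℝ (Fin (k * n)) ≃ₗᵢ[ℝ]
      PiLp 2 fun _ : Fin k => EuclideanSpace ℝ (Fin n)) := by
  let W := PiLp 2 fun _ : Fin k => EuclideanSpace ℝ (Fin n)
  have finrank_eq : finrank ℝ W = k * n := by
    simp [W, (WithLp.linearEquiv 2 ℝ (Fin k → EuclideanSpace ℝ (Fin n))).finrank_eq,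
      finrank_pi_fintype]
  exact ⟨((stdOrthonormalBasis ℝ W).reindex (finCongr finrank_eq)).repr.symm⟩

lemma exists_leech_lattice :
    ∃ (α : EuclideanSpace ℝ (Fin 24) →ₗ[ℝ] EuclideanSpace ℝ (Fin 24))
      (Λ : Submodule ℤ (EuclideanSpace ℝ (Fin 24))),
      IsAlpha α ∧ IsEvenSelfDual 1 Λ ∧ IsMinNorm Λ 4 ∧ ∀ x ∈ Λ, α x ∈ Λ := by
  have hα := isAlpha_halfLin_skewHadamard
  have hE8 : IsEvenSelfDual 1 (dPlus (Fin 8)) := isEvenSelfDual_dPlus (by simp)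
  have hstable := halfLin_skewHadamard_mem_dPlus
  obtain ⟨r, hr, hr2⟩ := exists_root_mem_dPlus
  obtain ⟨f⟩ := nonempty_linearIsometryEquiv_piLp 3 8
  refine ⟨_, pullback f.toLinearMap (turyn (halfLin skewHadamard) (dPlus (Fin 8))),
    (hα.diagMap 3).conj f, ?_, ?_, fun x hx => ?_⟩
  · exact (hα.isEvenSelfDual_turyn hE8 hstable).pullback_isometryEquiv f
  · exact (hα.isMinNorm_turyn hE8 hstable hr hr2).pullback_isometryEquiv f
  · simpa [mem_pullback, turyn] using diagMap_mem_LMN hstable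
      (fun _ => IsAlpha.map_mem_pullback_divConj hstable) _ hx

end Leech

/-- there are polarizations of rank 24 lattices by Niemeier lattices with
`μ(L(M,N,3)) = 4` and with `μ(L(M,N,3)) = 6`; in particular there is a rank 72 even
unimodular lattice of minimum norm exactly 6. -/
theorem statement10 :
    (∃ Υ M N : Submodule ℤ (EuclideanSpace ℝ (Fin 24)),
      IsLat Υ ∧ SqrtTwoEvenUnimod Υ ∧ IsPolarization Υ M N ∧
      IsLat M ∧ IsEvenLat M ∧ IsUnimodularLat M ∧
      IsLat N ∧ IsEvenLat N ∧ IsUnimodularLat N ∧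
      minNorm (LMN M N 3) = 4) ∧
    (∃ Υ M N : Submodule ℤ (EuclideanSpace ℝ (Fin 24)),
      IsLat Υ ∧ SqrtTwoEvenUnimod Υ ∧ IsPolarization Υ M N ∧
      IsLat M ∧ IsEvenLat M ∧ IsUnimodularLat M ∧
      IsLat N ∧ IsEvenLat N ∧ IsUnimodularLat N ∧
      minNorm (LMN M N 3) = 6) ∧
    (∃ L : Submodule ℤ (EuclideanSpace ℝ (Fin 72)),
      IsLat L ∧ IsEvenLat L ∧ IsUnimodularLat L ∧ minNorm L = 6) := by
  obtain ⟨α, Λ, hα, hΛ, hΛmin, hstable⟩ := exists_leech_lattice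
  obtain ⟨Υ, N, hΥ, hΥmin, hp, hNeven, r, hr, hr2⟩ :=
    hα.exists_polarization_of_isMinNorm_four hΛ hstable hΛmin
  have hN : IsEvenSelfDual 1 N := hp.isEvenSelfDual_right hΥ hNeven
  have min_four : IsMinNorm (LMN N Λ 3) 4 :=
    hp.symm.isMinNorm_LMN_of_root_left hΥ hNeven hΛ.isEvenLat le_rfl hr hr2
  have min_six : IsMinNorm (LMN Λ N 3) 6 := by
    convert hp.isMinNorm_LMN_of_root_right (k := 3) (fun _ => hΥmin.le) (fun _ => hΛmin.le)
      (by norm_num) (by norm_num) hr hr2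
    norm_num
  obtain ⟨f⟩ := nonempty_linearIsometryEquiv_piLp 3 24
  have hL : IsEvenSelfDual 1 (pullback f.toLinearMap (LMN Λ N 3)) :=
    (hp.isEvenSelfDual_LMN hΥ hΛ.isEvenLat hNeven).pullback_isometryEquiv f
  have hΥlat : IsLat Υ := hΥ.isLat two_pos
  have hΛlat : IsLat Λ := hΛ.isLat one_pos
  have hNlat : IsLat N := hN.isLat one_pos
  exact ⟨⟨Υ, N, Λ, hΥlat, hΥ.sqrtTwoEvenUnimod, hp.symm, hNlat, hNeven, hN.isUnimodularLat,
      hΛlat, hΛ.isEvenLat, hΛ.isUnimodularLat, min_four.minNorm_eq⟩,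
    ⟨Υ, Λ, N, hΥlat, hΥ.sqrtTwoEvenUnimod, hp, hΛlat, hΛ.isEvenLat, hΛ.isUnimodularLat,
      hNlat, hNeven, hN.isUnimodularLat, min_six.minNorm_eq⟩,
    ⟨_, hL.isLat one_pos, hL.isEvenLat, hL.isUnimodularLat,
      (min_six.pullback_isometryEquiv f).minNorm_eq⟩⟩
end
end

section
/- In the Leech polarization setup, let (w,x,y,z) be an offender and let K be the ℤ-span of {w,x,y,z} in V. Then: (i) w ∉ M and the image of K in Υ/M has order 2; and (ii) K is an even integral lattice, i.e. ⟪u,v⟫ ∈ ℤ for all u,v ∈ K and ⟪u,u⟫ ∈ 2ℤ for all u ∈ K (in particular ⟪w,x⟫, ⟪w,y⟫, ⟪w,z⟫ ∈ ℤ). -/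
noncomputable section

open scoped RealInnerProductSpace Pointwise
open Module

variable {V : Type*} [NormedAddCommGroup V] [InnerProductSpace ℝ V]

/-!
The lattice `M` has no vectors of norm 2, so `w + x` of norm 2 with `x ∈ M` forces `w ∉ M`, while
`2w ∈ 2Υ ⊆ M`; as `K` is generated by `w` modulo `M`, its image is cyclic of order 2. For the
second part, `w`, `x` and `w + x` all have even norm, so expanding `⟪w + x, w + x⟫` shows that
`⟪w, x⟫` is an integer, and likewise for `y` and `z`; a lattice generated by vectors of even norm
with integral mutual inner products is even.
-/

theorem exists_int_inner_of_mem_span {S : Set V} {x : V} (hS : ∀ s ∈ S, ∃ n : ℤ, ⟪x, s⟫ = (n : ℝ))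
    {y : V} (hy : y ∈ Submodule.span ℤ S) : ∃ n : ℤ, ⟪x, y⟫ = (n : ℝ) := by
  induction hy using Submodule.span_induction with
  | mem s hs => exact hS s hs
  | zero => exact ⟨0, by simp⟩
  | add a b _ _ iha ihb =>
    obtain ⟨m, hm⟩ := iha
    obtain ⟨n, hn⟩ := ihb
    exact ⟨m + n, by rw [inner_add_right, hm, hn, Int.cast_add]⟩
  | smul c a _ iha =>
    obtain ⟨n, hn⟩ := iha
    exact ⟨c * n, by rw [inner_smul_right_eq_smul, hn, zsmul_eq_mul, Int.cast_mul]⟩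

theorem isIntegralLat_span {S : Set V} (hS : ∀ x ∈ S, ∀ y ∈ S, ∃ n : ℤ, ⟪x, y⟫ = (n : ℝ)) :
    IsIntegralLat (Submodule.span ℤ S) := by
  intro x hx y hy
  refine exists_int_inner_of_mem_span (fun s hs => ?_) hy
  rw [real_inner_comm]
  exact exists_int_inner_of_mem_span (hS s hs) hx

theorem IsIntegralLat.isEvenLat_span {S : Set V} (hint : IsIntegralLat (Submodule.span ℤ S))
    (hself : ∀ x ∈ S, ∃ n : ℤ, ⟪x, x⟫ = 2 * (n : ℝ)) : IsEvenLat (Submodule.span ℤ S) := by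
  refine ⟨hint, fun u hu => ?_⟩
  induction hu using Submodule.span_induction with
  | mem s hs => exact hself s hs
  | zero => exact ⟨0, by simp⟩
  | add a b ha hb iha ihb =>
    obtain ⟨k, hk⟩ := iha
    obtain ⟨l, hl⟩ := ihb
    obtain ⟨n, hn⟩ := hint a ha b hb
    exact ⟨k + n + l, by rw [real_inner_add_add_self, hk, hl, hn]; push_cast; ring⟩
  | smul c a _ iha =>
    obtain ⟨k, hk⟩ := iha
    refine ⟨c * c * k, ?_⟩
    rw [inner_smul_left_eq_smul, inner_smul_right_eq_smul, hk, zsmul_eq_mul, zsmul_eq_mul]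
    push_cast
    ring

theorem isEvenLat_span_of_pairwise {S : Set V}
    (hpair : S.Pairwise fun x y => ∃ n : ℤ, ⟪x, y⟫ = (n : ℝ))
    (hself : ∀ x ∈ S, ∃ n : ℤ, ⟪x, x⟫ = 2 * (n : ℝ)) :
    IsEvenLat (Submodule.span ℤ S) := by
  refine IsIntegralLat.isEvenLat_span (isIntegralLat_span fun x hx y hy => ?_) hself
  obtain rfl | hxy := eq_or_ne x y
  · obtain ⟨n, hn⟩ := hself x hx
    exact ⟨2 * n, by rw [hn]; push_cast; rfl⟩
  · exact hpair hx hy hxy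

theorem exists_int_inner_of_even_norm_add {x y : V} (hx : ∃ n : ℤ, ⟪x, x⟫ = 2 * (n : ℝ))
    (hy : ∃ n : ℤ, ⟪y, y⟫ = 2 * (n : ℝ)) (hxy : ∃ n : ℤ, ⟪x + y, x + y⟫ = 2 * (n : ℝ)) :
    ∃ n : ℤ, ⟪x, y⟫ = (n : ℝ) := by
  obtain ⟨k, hk⟩ := hx
  obtain ⟨l, hl⟩ := hy
  obtain ⟨n, hn⟩ := hxy
  rw [real_inner_add_add_self] at hn
  exact ⟨n - k - l, by push_cast; linarith⟩

theorem IsEvenLat.span_insert {M : Submodule ℤ V} (hM : IsEvenLat M) {S : Set V} (hSM : S ⊆ M)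
    {w : V} (hw : ∃ n : ℤ, ⟪w, w⟫ = 2 * (n : ℝ))
    (hwS : ∀ s ∈ S, ∃ n : ℤ, ⟪w + s, w + s⟫ = 2 * (n : ℝ)) :
    IsEvenLat (Submodule.span ℤ (insert w S)) := by
  have hself : ∀ s ∈ S, ∃ n : ℤ, ⟪s, s⟫ = 2 * (n : ℝ) := fun s hs => hM.2 s (hSM hs)
  have hcross : ∀ s ∈ S, ∃ n : ℤ, ⟪w, s⟫ = (n : ℝ) := fun s hs =>
    exists_int_inner_of_even_norm_add hw (hself s hs) (hwS s hs)
  refine isEvenLat_span_of_pairwise ?_ (Set.forall_mem_insert.2 ⟨hw, hself⟩)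
  refine Set.Pairwise.insert (fun s hs t ht _ => hM.1 s (hSM hs) t (hSM ht)) fun s hs _ => ?_
  exact ⟨hcross s hs, real_inner_comm w s ▸ hcross s hs⟩

theorem minNorm_le_inner_self {L : Submodule ℤ V} {x : V} (hx : x ∈ L) (hx0 : x ≠ 0) :
    minNorm L ≤ ⟪x, x⟫ := by
  refine csInf_le ⟨0, ?_⟩ ⟨x, hx, hx0, rfl⟩
  rintro _ ⟨v, -, -, rfl⟩
  exact real_inner_self_nonneg

theorem inner_self_ne_of_lt_minNorm {L : Submodule ℤ V} {r : ℝ} (hr0 : r ≠ 0)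
    (hr : r < minNorm L) {x : V} (hx : x ∈ L) : ⟪x, x⟫ ≠ r := by
  rintro rfl
  exact hr.not_ge (minNorm_le_inner_self hx (inner_self_ne_zero.1 hr0))

theorem map_mkQ_span_insert {R A : Type*} [Ring R] [AddCommGroup A] [Module R A]
    {M : Submodule R A} {S : Set A} (hSM : S ⊆ M) (w : A) :
    (Submodule.span R (insert w S)).map M.mkQ = Submodule.span R {M.mkQ w} := by
  have hS : (Submodule.span R S).map M.mkQ = ⊥ := by
    rw [← le_bot_iff, Submodule.map_span_le]
    exact fun s hs => (Submodule.Quotient.mk_eq_zero M).2 (hSM hs)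
  rw [Submodule.span_insert, Submodule.map_sup, hS, sup_bot_eq, Submodule.map_span,
    Set.image_singleton]

theorem card_map_mkQ_span_insert {A : Type*} [AddCommGroup A] {M : Submodule ℤ A} {S : Set A}
    (hSM : S ⊆ M) (w : A) :
    Nat.card ((Submodule.span ℤ (insert w S)).map M.mkQ) = addOrderOf (M.mkQ w) := by
  rw [map_mkQ_span_insert hSM, ← Nat.card_zmultiples,
    ← Submodule.span_singleton_toAddSubgroup_eq_zmultiples]
  rfl

theorem addOrderOf_mkQ_eq_prime {R A : Type*} [Ring R] [AddCommGroup A] [Module R A]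
    {M : Submodule R A} {p : ℕ} [Fact p.Prime] {w : A} (hw : w ∉ M) (hpw : p • w ∈ M) :
    addOrderOf (M.mkQ w) = p := by
  refine addOrderOf_eq_prime ?_ (mt (Submodule.Quotient.mk_eq_zero M).1 hw)
  rw [← map_nsmul]
  exact (Submodule.Quotient.mk_eq_zero M).2 hpw

theorem IsPolarization.two_nsmul_mem_left {Υ M N : Submodule ℤ V} (h : IsPolarization Υ M N)
    {v : V} (hv : v ∈ Υ) : 2 • v ∈ M := by
  obtain ⟨-, -, -, -, -, hMN⟩ := h
  have h2v : (2 : ℤ) • v ∈ M ⊓ N := hMN ▸ Submodule.smul_mem_pointwise_smul v 2 Υ hv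
  rw [← ofNat_zsmul]
  exact h2v.1

theorem statement12_general {M : Submodule ℤ V} (hM : IsEvenLat M) (hM2 : ∀ v ∈ M, ⟪v, v⟫ ≠ 2)
    {w : V} (hw : ∃ n : ℤ, ⟪w, w⟫ = 2 * (n : ℝ)) (h2w : 2 • w ∈ M)
    {S : Set V} (hS : S.Nonempty) (hSM : S ⊆ M) (hwS : ∀ s ∈ S, ⟪w + s, w + s⟫ = 2) :
    (w ∉ M ∧ Nat.card ((Submodule.span ℤ (insert w S)).map M.mkQ) = 2) ∧
      IsEvenLat (Submodule.span ℤ (insert w S)) := by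
  have hwM : w ∉ M := by
    obtain ⟨s, hs⟩ := hS
    exact fun hwM => hM2 (w + s) (M.add_mem hwM (hSM hs)) (hwS s hs)
  refine ⟨⟨hwM, ?_⟩, hM.span_insert hSM hw fun s hs => ⟨1, by rw [hwS s hs]; norm_num⟩⟩
  rw [card_map_mkQ_span_insert hSM, addOrderOf_mkQ_eq_prime hwM h2w]

/-- for an offender `(w,x,y,z)` with `K = spanℤ{w,x,y,z}`:
(i) `w ∉ M` and the image of `K` in `V/M` has order 2; (ii) `K` is an even integral
lattice. -/
theorem statement12 (Υ M N : Submodule ℤ V) (h : LeechSetup Υ M N)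
    (w x y z : V) (hoff : Offender M N w x y z) :
    (w ∉ M ∧
      Nat.card ((Submodule.span ℤ ({w, x, y, z} : Set V)).map M.mkQ) = 2) ∧
    ((∀ u ∈ Submodule.span ℤ ({w, x, y, z} : Set V),
        ∀ v ∈ Submodule.span ℤ ({w, x, y, z} : Set V), ∃ n : ℤ, ⟪u, v⟫ = (n : ℝ)) ∧
      ∀ u ∈ Submodule.span ℤ ({w, x, y, z} : Set V), ∃ n : ℤ, ⟪u, u⟫ = 2 * (n : ℝ)) := by
  obtain ⟨-, -, -, -, hpol, -, hM, -, hmin, -, hN, -, -⟩ := h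
  obtain ⟨⟨hw, hx, hy, hz, -⟩, hwx, hwy, hwz⟩ := hoff
  have hM2 : ∀ v ∈ M, ⟪v, v⟫ ≠ 2 := fun _ =>
    inner_self_ne_of_lt_minNorm two_ne_zero (by rw [hmin]; norm_num)
  have hwS : ∀ s ∈ ({x, y, z} : Set V), ⟪w + s, w + s⟫ = 2 := by
    rintro s (rfl | rfl | rfl) <;> assumption
  have hSM : {x, y, z} ⊆ (M : Set V) := by rintro s (rfl | rfl | rfl) <;> assumption
  exact statement12_general hM hM2 (hN.2 w hw) (hpol.two_nsmul_mem_left (hpol.2.1 hw))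
    (Set.insert_nonempty x {y, z}) hSM hwS
end
end

section
/- In the Leech polarization setup, let (w,x,y,z) be an offender with ⟪w,w⟫ = 4, and set r = w+x, s = w+y, t = w+z. Then exactly two of the inner products ⟪w,r⟫, ⟪w,s⟫, ⟪w,t⟫ are 0 and the remaining one is 1 or −1; consequently the unordered multiset of norms {⟪x,x⟫, ⟪y,y⟫, ⟪z,z⟫} is {6,6,4} or {6,6,8}. -/
noncomputable section

open scoped RealInnerProductSpace Pointwise
open Module

variable {V : Type*} [NormedAddCommGroup V] [InnerProductSpace ℝ V]

/-!
Put `r = w + x`, `s = w + y`, `t = w + z`. Modulo `M` all of `r`, `s`, `t` agree with `w`, so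
`r ± s ∈ M`; neither vanishes, since otherwise `t` would be a vector of norm 2 in `N`. As `M` has
minimum norm 4, this forces `⟪r, s⟫ = 0`, and likewise for the other pairs.

Moreover `w - (r + s + t) ∈ 2Υ`, and so `d = w - (± r ± s ± t) ∈ 2Υ` for every choice of signs.
With the signs that make the inner products with `w` nonnegative,
`⟪d, d⟫ = 10 - 2 (|⟪w, r⟫| + |⟪w, s⟫| + |⟪w, t⟫|)`. This is at most 10, a multiple of 4, and at
least 8, so the absolute values sum to 1. Finally, `w ∈ r + s + t + 2Υ` makes the three inner
products integral.
-/

lemma minNorm_le_inner_self_s14 {L : Submodule ℤ V} {v : V} (hv : v ∈ L) (hv0 : v ≠ 0) :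
    minNorm L ≤ ⟪v, v⟫ :=
  csInf_le ⟨0, by rintro _ ⟨u, -, -, rfl⟩; exact real_inner_self_nonneg⟩ ⟨v, hv, hv0, rfl⟩

section InnerProduct

lemma inner_eq_zero_of_le_add_of_le_sub {p q : V}
    (hadd : ⟪p, p⟫ + ⟪q, q⟫ ≤ ⟪p + q, p + q⟫) (hsub : ⟪p, p⟫ + ⟪q, q⟫ ≤ ⟪p - q, p - q⟫) :
    ⟪p, q⟫ = 0 := by
  rw [real_inner_add_add_self] at hadd
  rw [real_inner_sub_sub_self] at hsub
  linarith

lemma inner_self_eq_sub_two_mul_inner_add (w x : V) :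
    ⟪x, x⟫ = ⟪w, w⟫ + ⟪w + x, w + x⟫ - 2 * ⟪w, w + x⟫ := by
  rw [real_inner_add_add_self, inner_add_right]
  ring

lemma inner_units_smul_self (ε : ℤˣ) (v : V) : ⟪ε • v, ε • v⟫ = ⟪v, v⟫ := by
  obtain rfl | rfl := Int.units_eq_one_or ε <;> simp

lemma inner_units_smul_units_smul_eq_zero {u v : V} (h : ⟪u, v⟫ = 0) (ε δ : ℤˣ) :
    ⟪ε • u, δ • v⟫ = 0 := by
  obtain rfl | rfl := Int.units_eq_one_or ε <;> obtain rfl | rfl := Int.units_eq_one_or δ <;>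
    simp [h]

lemma exists_inner_units_smul_eq_abs (w v : V) : ∃ ε : ℤˣ, ⟪w, ε • v⟫ = |⟪w, v⟫| := by
  obtain h | h := le_total 0 ⟪w, v⟫
  · exact ⟨1, by rw [one_smul, abs_of_nonneg h]⟩
  · exact ⟨-1, by rw [Units.neg_smul, one_smul, inner_neg_right, abs_of_nonpos h]⟩

variable {ι : Type*} [Fintype ι]

lemma inner_sum_right_of_pairwise {u : ι → V} (hu : Pairwise fun i j => ⟪u i, u j⟫ = 0) (i : ι) :
    ⟪u i, ∑ j, u j⟫ = ⟪u i, u i⟫ := by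
  rw [inner_sum]
  exact Fintype.sum_eq_single i fun j hj => hu hj.symm

lemma inner_sum_sum_of_pairwise {u : ι → V} (hu : Pairwise fun i j => ⟪u i, u j⟫ = 0) :
    ⟪∑ i, u i, ∑ i, u i⟫ = ∑ i, ⟪u i, u i⟫ := by
  rw [sum_inner]
  exact Finset.sum_congr rfl fun i _ => inner_sum_right_of_pairwise hu i

end InnerProduct

section LatticeNorms

variable {Υ : Submodule ℤ V}

lemma exists_int_two_mul_inner_eq (hint : ∀ v ∈ Υ, ∃ n : ℤ, ⟪v, v⟫ = n) {u v : V}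
    (hu : u ∈ Υ) (hv : v ∈ Υ) : ∃ n : ℤ, 2 * ⟪u, v⟫ = n := by
  obtain ⟨a, ha⟩ := hint _ (Υ.add_mem hu hv)
  obtain ⟨b, hb⟩ := hint u hu
  obtain ⟨c, hc⟩ := hint v hv
  refine ⟨a - b - c, ?_⟩
  rw [real_inner_add_add_self] at ha
  push_cast
  linarith

lemma exists_inner_self_eq_four_mul {d : V} (hd : d ∈ (2 : ℤ) • Υ) :
    ∃ v ∈ Υ, d = (2 : ℤ) • v ∧ ⟪d, d⟫ = 4 * ⟪v, v⟫ := by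
  obtain ⟨v, hv, rfl⟩ := (Submodule.mem_smul_pointwise_iff_exists _ _ _).1 hd
  refine ⟨v, hv, rfl, ?_⟩
  rw [two_zsmul, real_inner_add_add_self]
  ring

end LatticeNorms

/-- `u` is a *frame* for `w` modulo `2Υ`: a family of pairwise orthogonal vectors of `Υ` whose sum
is congruent to `w` modulo `2Υ`. No linear independence or spanning condition is imposed. -/
structure IsFrameModTwo {ι : Type*} [Fintype ι] (Υ : Submodule ℤ V) (w : V) (u : ι → V) :
    Prop where
  mem : ∀ i, u i ∈ Υ
  pairwise_inner_eq_zero : Pairwise fun i j => ⟪u i, u j⟫ = 0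
  sub_sum_mem : w - ∑ i, u i ∈ (2 : ℤ) • Υ

namespace IsFrameModTwo

variable {ι : Type*} [Fintype ι] {Υ : Submodule ℤ V} {w : V} {u : ι → V}

lemma units_smul (h : IsFrameModTwo Υ w u) (ε : ι → ℤˣ) :
    IsFrameModTwo Υ w fun i => ε i • u i where
  mem i := Υ.smul_mem (ε i : ℤ) (h.mem i)
  pairwise_inner_eq_zero i j hij :=
    inner_units_smul_units_smul_eq_zero (h.pairwise_inner_eq_zero hij) (ε i) (ε j)
  sub_sum_mem := by
    have sub_smul_mem (i : ι) : u i - ε i • u i ∈ (2 : ℤ) • Υ := by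
      obtain hε | hε := Int.units_eq_one_or (ε i)
      · simp [hε]
      · simpa [hε, two_zsmul] using Submodule.smul_mem_pointwise_smul (u i) (2 : ℤ) Υ (h.mem i)
    have hsum : w - ∑ i, ε i • u i = w - ∑ i, u i + ∑ i, (u i - ε i • u i) := by
      rw [Finset.sum_sub_distrib]
      abel
    rw [hsum]
    exact add_mem h.sub_sum_mem (sum_mem fun i _ => sub_smul_mem i)

lemma inner_self_sub_sum (h : IsFrameModTwo Υ w u) :
    ⟪w - ∑ i, u i, w - ∑ i, u i⟫ = ⟪w, w⟫ + ∑ i, ⟪u i, u i⟫ - 2 * ∑ i, ⟪w, u i⟫ := by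
  rw [real_inner_sub_sub_self, inner_sum_sum_of_pairwise h.pairwise_inner_eq_zero, inner_sum]
  ring

lemma exists_int_inner_eq (h : IsFrameModTwo Υ w u) (hint : ∀ v ∈ Υ, ∃ n : ℤ, ⟪v, v⟫ = n)
    (i : ι) : ∃ n : ℤ, ⟪w, u i⟫ = n := by
  obtain ⟨v, hv, hwv, -⟩ := exists_inner_self_eq_four_mul h.sub_sum_mem
  obtain ⟨a, ha⟩ := hint _ (h.mem i)
  obtain ⟨b, hb⟩ := exists_int_two_mul_inner_eq hint hv (h.mem i)
  refine ⟨a + b, ?_⟩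
  calc ⟪w, u i⟫ = ⟪∑ j, u j, u i⟫ + ⟪w - ∑ j, u j, u i⟫ := by rw [inner_sub_left]; ring
    _ = ⟪u i, u i⟫ + 2 * ⟪v, u i⟫ := by
      rw [real_inner_comm, inner_sum_right_of_pairwise h.pairwise_inner_eq_zero, hwv, two_zsmul,
        inner_add_left]
      ring
    _ = ((a + b : ℤ) : ℝ) := by rw [ha, hb]; push_cast; rfl

lemma sum_inner_eq_one_of_nonneg (h : IsFrameModTwo Υ w u)
    (hint : ∀ v ∈ Υ, ∃ n : ℤ, ⟪v, v⟫ = n) (hmin : ∀ v ∈ Υ, v ≠ 0 → 2 ≤ ⟪v, v⟫)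
    (hw : ⟪w, w⟫ = 4) (hu : ∑ i, ⟪u i, u i⟫ = 6) (hnonneg : 0 ≤ ∑ i, ⟪w, u i⟫) :
    ∑ i, ⟪w, u i⟫ = 1 := by
  obtain ⟨v, hv, hwv, hnorm⟩ := exists_inner_self_eq_four_mul h.sub_sum_mem
  have hv0 : v ≠ 0 := by
    rintro rfl
    have hw_eq : w = ∑ i, u i := by simpa [sub_eq_zero] using hwv
    have := inner_sum_sum_of_pairwise h.pairwise_inner_eq_zero
    rw [← hw_eq] at this
    linarith
  rw [h.inner_self_sub_sum, hw, hu] at hnorm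
  obtain ⟨k, hk⟩ := hint v hv
  have hvv : ⟪v, v⟫ = 2 := by
    have hk_ge : (2 : ℝ) ≤ k := hk ▸ hmin v hv hv0
    have hk_lt : (k : ℝ) < 3 := by linarith
    have hk_eq : k = 2 := le_antisymm (Int.lt_add_one_iff.1 (by exact_mod_cast hk_lt))
      (by exact_mod_cast hk_ge)
    rw [hk, hk_eq, Int.cast_ofNat]
  linarith

lemma sum_abs_inner_eq_one (h : IsFrameModTwo Υ w u) (hint : ∀ v ∈ Υ, ∃ n : ℤ, ⟪v, v⟫ = n)
    (hmin : ∀ v ∈ Υ, v ≠ 0 → 2 ≤ ⟪v, v⟫) (hw : ⟪w, w⟫ = 4) (hu : ∑ i, ⟪u i, u i⟫ = 6) :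
    ∑ i, |⟪w, u i⟫| = 1 := by
  choose ε hε using fun i => exists_inner_units_smul_eq_abs w (u i)
  simp only [← hε]
  refine (h.units_smul ε).sum_inner_eq_one_of_nonneg hint hmin hw ?_ ?_
  · simpa only [inner_units_smul_self] using hu
  · exact Finset.sum_nonneg fun i _ => hε i ▸ abs_nonneg _

end IsFrameModTwo

section Polarization

variable {Υ M N : Submodule ℤ V} {w x y z : V}

omit [InnerProductSpace ℝ V] in
lemma Admissible.sub_sum_mem (h : Admissible M N w x y z) (hw : (2 : ℤ) • w ∈ M ⊓ N) :
    w - (w + x + (w + y) + (w + z)) ∈ M ⊓ N := by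
  obtain ⟨-, -, -, -, hxyz⟩ := h
  have heq : w - (w + x + (w + y) + (w + z)) = -(x + y + z) - (2 : ℤ) • w := by
    rw [two_zsmul]
    abel
  rw [heq]
  exact sub_mem (neg_mem hxyz) hw

lemma Offender.rotate (h : Offender M N w x y z) : Offender M N w y z x := by
  obtain ⟨⟨hw, hx, hy, hz, hxyz⟩, hr, hs, ht⟩ := h
  exact ⟨⟨hw, hy, hz, hx, by rwa [← add_rotate]⟩, hs, ht, hr⟩

lemma Offender.inner_add_add_eq_zero (h : Offender M N w x y z) (hMΥ : M ≤ Υ) (hNΥ : N ≤ Υ)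
    (htwo : (2 : ℤ) • Υ ≤ M ⊓ N) (hM : ∀ v ∈ M, v ≠ 0 → 4 ≤ ⟪v, v⟫)
    (hN : ∀ v ∈ N, ⟪v, v⟫ ≠ 2) : ⟪w + x, w + y⟫ = 0 := by
  obtain ⟨⟨hw, hx, hy, -, hxyz⟩, hr, hs, ht⟩ := h
  have two_smul_mem {v : V} (hv : v ∈ Υ) : (2 : ℤ) • v ∈ M ⊓ N :=
    htwo (Submodule.smul_mem_pointwise_smul v 2 Υ hv)
  have ht_notMem : w + z ∉ N := fun hmem => hN _ hmem ht
  have hadd_mem : w + x + (w + y) ∈ M := by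
    have heq : w + x + (w + y) = x + y + (2 : ℤ) • w := by rw [two_zsmul]; abel
    rw [heq]
    exact add_mem (add_mem hx hy) (two_smul_mem (hNΥ hw)).1
  have hsub_mem : w + x - (w + y) ∈ M := by
    rw [add_sub_add_left_eq_sub]
    exact sub_mem hx hy
  have hadd_ne : w + x + (w + y) ≠ 0 := fun h0 => ht_notMem <| by
    have heq : w + z = x + y + z + (w + (2 : ℤ) • w) - (w + x + (w + y)) := by
      rw [two_zsmul]; abel
    rw [heq, h0, sub_zero]
    exact add_mem hxyz.2 (add_mem hw (zsmul_mem hw 2))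
  have hsub_ne : w + x - (w + y) ≠ 0 := fun h0 => ht_notMem <| by
    have heq : w + z = w + (x + y + z) - (2 : ℤ) • x + (w + x - (w + y)) := by
      rw [two_zsmul]; abel
    rw [heq, h0, add_zero]
    exact sub_mem (add_mem hw hxyz.2) (two_smul_mem (hMΥ hx)).2
  apply inner_eq_zero_of_le_add_of_le_sub
  · linarith [hM _ hadd_mem hadd_ne]
  · linarith [hM _ hsub_mem hsub_ne]

lemma Offender.isFrameModTwo (h : Offender M N w x y z) (hMΥ : M ≤ Υ) (hNΥ : N ≤ Υ)
    (hMN : M ⊓ N = (2 : ℤ) • Υ) (hM : ∀ v ∈ M, v ≠ 0 → 4 ≤ ⟪v, v⟫)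
    (hN : ∀ v ∈ N, ⟪v, v⟫ ≠ 2) : IsFrameModTwo Υ w ![w + x, w + y, w + z] := by
  obtain ⟨hw, hx, hy, hz, -⟩ := h.1
  have hwΥ : w ∈ Υ := hNΥ hw
  have hrs := h.inner_add_add_eq_zero hMΥ hNΥ hMN.ge hM hN
  have hst := h.rotate.inner_add_add_eq_zero hMΥ hNΥ hMN.ge hM hN
  have hrt : ⟪w + x, w + z⟫ = 0 := by
    rw [real_inner_comm]
    exact h.rotate.rotate.inner_add_add_eq_zero hMΥ hNΥ hMN.ge hM hN
  refine ⟨?_, ?_, ?_⟩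
  · simp [Fin.forall_fin_succ, add_mem hwΥ (hMΥ hx), add_mem hwΥ (hMΥ hy), add_mem hwΥ (hMΥ hz)]
  · simp [pairwise_fin_succ_iff, Fin.forall_fin_succ, hrs, hst, hrt, real_inner_comm]
  · rw [Fin.sum_univ_three, ← hMN]
    exact h.1.sub_sum_mem (hMN ▸ Submodule.smul_mem_pointwise_smul w 2 Υ hwΥ)

end Polarization

lemma multiset_eq_of_abs_add_abs_add_abs_eq_one {a b c : ℤ} (h : |a| + |b| + |c| = 1) :
    ({a, b, c} : Multiset ℤ) = {0, 0, 1} ∨ ({a, b, c} : Multiset ℤ) = {0, 0, -1} := by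
  have ha : |a| ≤ 1 := by linarith [abs_nonneg b, abs_nonneg c]
  have hb : |b| ≤ 1 := by linarith [abs_nonneg a, abs_nonneg c]
  have hc : |c| ≤ 1 := by linarith [abs_nonneg a, abs_nonneg b]
  obtain ⟨ha₁, ha₂⟩ := abs_le.1 ha
  obtain ⟨hb₁, hb₂⟩ := abs_le.1 hb
  obtain ⟨hc₁, hc₂⟩ := abs_le.1 hc
  clear ha hb hc
  interval_cases a <;> interval_cases b <;> interval_cases c <;> revert h <;> decide

section Conclusion

variable {Υ M N : Submodule ℤ V} {w x y z : V}

lemma Offender.multiset_inner_eq (hoff : Offender M N w x y z) (hw : ⟪w, w⟫ = 4)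
    (hint : ∀ v ∈ Υ, ∃ n : ℤ, ⟪v, v⟫ = n) (hmin : ∀ v ∈ Υ, v ≠ 0 → 2 ≤ ⟪v, v⟫)
    (hMΥ : M ≤ Υ) (hNΥ : N ≤ Υ) (hMN : M ⊓ N = (2 : ℤ) • Υ)
    (hM : ∀ v ∈ M, v ≠ 0 → 4 ≤ ⟪v, v⟫) (hN : ∀ v ∈ N, ⟪v, v⟫ ≠ 2) :
    ({⟪w, w + x⟫, ⟪w, w + y⟫, ⟪w, w + z⟫} : Multiset ℝ) = {0, 0, 1} ∨
      ({⟪w, w + x⟫, ⟪w, w + y⟫, ⟪w, w + z⟫} : Multiset ℝ) = {0, 0, -1} := by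
  have hframe := hoff.isFrameModTwo hMΥ hNΥ hMN hM hN
  obtain ⟨a, ha⟩ : ∃ a : ℤ, ⟪w, w + x⟫ = a := hframe.exists_int_inner_eq hint 0
  obtain ⟨b, hb⟩ : ∃ b : ℤ, ⟪w, w + y⟫ = b := hframe.exists_int_inner_eq hint 1
  obtain ⟨c, hc⟩ : ∃ c : ℤ, ⟪w, w + z⟫ = c := hframe.exists_int_inner_eq hint 2
  have hsum : |⟪w, w + x⟫| + |⟪w, w + y⟫| + |⟪w, w + z⟫| = 1 := by
    obtain ⟨-, hr, hs, ht⟩ := hoff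
    have hnorms : ∑ i, ⟪![w + x, w + y, w + z] i, ![w + x, w + y, w + z] i⟫ = 6 := by
      simp only [Fin.sum_univ_three, Matrix.cons_val, hr, hs, ht]
      norm_num
    simpa [Fin.sum_univ_three] using hframe.sum_abs_inner_eq_one hint hmin hw hnorms
  rw [ha, hb, hc] at hsum ⊢
  have habc := multiset_eq_of_abs_add_abs_add_abs_eq_one (a := a) (b := b) (c := c)
    (by exact_mod_cast hsum)
  exact habc.imp (fun h => by simpa using congrArg (Multiset.map (Int.cast : ℤ → ℝ)) h)
    (fun h => by simpa using congrArg (Multiset.map (Int.cast : ℤ → ℝ)) h)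

lemma Offender.multiset_inner_self_eq_map (hoff : Offender M N w x y z) (hw : ⟪w, w⟫ = 4) :
    ({⟪x, x⟫, ⟪y, y⟫, ⟪z, z⟫} : Multiset ℝ) =
      ({⟪w, w + x⟫, ⟪w, w + y⟫, ⟪w, w + z⟫} : Multiset ℝ).map fun a => 6 - 2 * a := by
  obtain ⟨-, hr, hs, ht⟩ := hoff
  rw [inner_self_eq_sub_two_mul_inner_add w x, inner_self_eq_sub_two_mul_inner_add w y,
    inner_self_eq_sub_two_mul_inner_add w z, hw, hr, hs, ht]
  norm_num

end Conclusion

theorem statement14_general {Υ M N : Submodule ℤ V}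
    (hint : ∀ v ∈ Υ, ∃ n : ℤ, ⟪v, v⟫ = n) (hmin : ∀ v ∈ Υ, v ≠ 0 → 2 ≤ ⟪v, v⟫)
    (hMΥ : M ≤ Υ) (hNΥ : N ≤ Υ) (hMN : M ⊓ N = (2 : ℤ) • Υ)
    (hM : ∀ v ∈ M, v ≠ 0 → 4 ≤ ⟪v, v⟫) (hN : ∀ v ∈ N, ⟪v, v⟫ ≠ 2)
    {w x y z : V} (hoff : Offender M N w x y z) (hw : ⟪w, w⟫ = 4) :
    (({⟪w, w + x⟫, ⟪w, w + y⟫, ⟪w, w + z⟫} : Multiset ℝ) = {0, 0, 1} ∨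
      ({⟪w, w + x⟫, ⟪w, w + y⟫, ⟪w, w + z⟫} : Multiset ℝ) = {0, 0, -1}) ∧
    (({⟪x, x⟫, ⟪y, y⟫, ⟪z, z⟫} : Multiset ℝ) = {6, 6, 4} ∨
      ({⟪x, x⟫, ⟪y, y⟫, ⟪z, z⟫} : Multiset ℝ) = {6, 6, 8}) := by
  have hinner := hoff.multiset_inner_eq hw hint hmin hMΥ hNΥ hMN hM hN
  refine ⟨hinner, ?_⟩
  rw [hoff.multiset_inner_self_eq_map hw]
  exact hinner.imp (fun h => by rw [h]; norm_num) (fun h => by rw [h]; norm_num)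

/-- for an offender with `⟪w,w⟫ = 4`, exactly two of
`⟪w,w+x⟫, ⟪w,w+y⟫, ⟪w,w+z⟫` vanish and the third is `±1`; consequently the multiset of
norms `{⟪x,x⟫, ⟪y,y⟫, ⟪z,z⟫}` is `{6,6,4}` or `{6,6,8}`. -/
theorem statement14 (Υ M N : Submodule ℤ V) (h : LeechSetup Υ M N)
    (w x y z : V) (hoff : Offender M N w x y z) (hw : ⟪w, w⟫ = 4) :
    (({⟪w, w + x⟫, ⟪w, w + y⟫, ⟪w, w + z⟫} : Multiset ℝ) = ({0, 0, 1} : Multiset ℝ) ∨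
      ({⟪w, w + x⟫, ⟪w, w + y⟫, ⟪w, w + z⟫} : Multiset ℝ) = ({0, 0, -1} : Multiset ℝ)) ∧
    (({⟪x, x⟫, ⟪y, y⟫, ⟪z, z⟫} : Multiset ℝ) = ({6, 6, 4} : Multiset ℝ) ∨
      ({⟪x, x⟫, ⟪y, y⟫, ⟪z, z⟫} : Multiset ℝ) = ({6, 6, 8} : Multiset ℝ)) := by
  obtain ⟨-, -, ⟨hint, -, -⟩, hmin, ⟨hMΥ, hNΥ, -, -, -, hMN⟩, -, -, -, hM, -, -, -, hN⟩ := h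
  refine statement14_general hint (fun v hv hv0 => by linarith [hmin v hv hv0]) hMΥ hNΥ hMN
    (fun v hv hv0 => hM ▸ minNorm_le_inner_self_s14 hv hv0) (fun v hv hv2 => ?_) hoff hw
  have hv0 : v ≠ 0 := by rintro rfl; simp at hv2
  linarith [minNorm_le_inner_self_s14 hv hv0]
end
end
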